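/- arXiv:math/0506058 — 3 statements merged into one kernel-verified Lean document; each statement's English description precedes it below -/
import Mathlib

section
/- Let R = 𝔽_p[u,v,w,x,y,z] for a prime p, and let I be the ideal of 2×2 minors of the matrix with rows (u,v,w), (x,y,z). Then H^3_I(R) = 0. -/
/-!
STATEMENT 6: Let `R = 𝔽_p[u,v,w,x,y,z]` and `I` the ideal of `2×2` minors of the
matrix with rows `(u,v,w)`, `(x,y,z)`.  Then `H^3_I(R) = 0`.
-/

open CategoryTheory MvPolynomial

/-!
Write `δ = a × b` for the vector of minors of the matrix with rows `a`, `b`. In characteristic `p`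
the Frobenius power `I^{[p^e]}` is generated by the minors of the matrix with rows `a^{p^e}`,
`b^{p^e}`, and regularity of `δ₂, δ₀` passes to their powers; so every `R / I^{[p^e]}` has a
Hilbert–Burch resolution `0 → R² → R³ → R` and its `Ext` groups vanish from degree three on. The
Frobenius powers are cofinal with the ordinary ones, hence local cohomology vanishes in the same
degrees. For the generic `2 × 3` matrix, `δ₂` and `δ₀` have coprime lexicographic leading terms,
which makes them a regular sequence.
-/

universe u

section HomologicalAlgebra

open Limits

lemma isZero_Ext_succ_of_hasProjectiveDimensionLT {k C : Type*} [Ring k] [Category* C] [Abelian C]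
    [Linear k C] [EnoughProjectives C] (X Y : C) (d : ℕ)
    [HasProjectiveDimensionLT X d] {n : ℕ} (hn : d ≤ n + 1) :
    IsZero (((Ext k C (n + 1)).obj (Opposite.op X)).obj Y) := by
  have := HasExt.standard C
  let P := projectiveResolution X
  refine IsZero.of_iso ?_ (P.isoExt (n + 1) Y)
  rw [← HomologicalComplex.exactAt_iff_isZero_homology,
    HomologicalComplex.exactAt_iff' _ n (n + 1) (n + 2) (by simp) (by simp),
    ShortComplex.moduleCat_exact_iff]
  intro (f : P.complex.X (n + 1) ⟶ Y) (hf : P.complex.d (n + 2) (n + 1) ≫ f = 0)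
  have hclass : P.extMk f (n + 2) rfl hf = 0 :=
    Abelian.Ext.eq_zero_of_hasProjectiveDimensionLT _ d hn
  exact (P.extMk_eq_zero_iff f (n + 2) rfl hf n rfl).1 hclass

lemma isZero_colimit_of_forall_exists_map_eq_zero {J C : Type*} [Category* J] [Category* C]
    [HasZeroMorphisms C] (D : J ⥤ C) [HasColimit D]
    (h : ∀ j, ∃ (j' : J) (φ : j ⟶ j'), D.map φ = 0) : IsZero (colimit D) := by
  rw [IsZero.iff_id_eq_zero]
  refine colimit.hom_ext fun j ↦ ?_
  obtain ⟨j', φ, hφ⟩ := h j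
  simp [← colimit.w D φ, hφ]

variable {R : Type u} [CommRing R]

lemma hasProjectiveDimensionLT_quotient_range {A B C : Type u} [AddCommGroup A] [AddCommGroup B]
    [AddCommGroup C] [Module R A] [Module R B] [Module R C] [Module.Projective R A]
    [Module.Projective R B] [Module.Projective R C] {f : A →ₗ[R] B} {g : B →ₗ[R] C}
    (hf : Function.Injective f) (hfg : Function.Exact f g) :
    HasProjectiveDimensionLT (ModuleCat.of R (C ⧸ LinearMap.range g)) 3 := by
  have hker : Module.Projective R (LinearMap.ker g.rangeRestrict) :=
    .of_equiv (LinearEquiv.ofInjective f hf ≪≫ₗ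
      .ofEq _ _ (by rw [LinearMap.ker_rangeRestrict, hfg.linearMap_ker_eq]))
  have hrange : HasProjectiveDimensionLT (ModuleCat.of R (LinearMap.range g)) 2 :=
    (LinearMap.shortExact_shortComplexKer g.surjective_rangeRestrict).hasProjectiveDimensionLT_X₃ 1
      inferInstance inferInstance
  refine (LinearMap.shortExact_shortComplexKer
    (LinearMap.range g).mkQ_surjective).hasProjectiveDimensionLT_X₃ 2 ?_ inferInstance
  change HasProjectiveDimensionLT (ModuleCat.of R (LinearMap.range g).mkQ.ker) 2
  rwa [Submodule.ker_mkQ]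

lemma isZero_localCohomology_of_forall_exists_isZero_Ext {I : Ideal R} (hI : I.FG) {n : ℕ}
    {N : ModuleCat.{u} R}
    (h : ∀ t : ℕ, ∃ J ≤ I ^ t, I ≤ J.radical ∧
      IsZero (((Ext R (ModuleCat.{u} R) n).obj (.op (.of R (R ⧸ J)))).obj N)) :
    IsZero ((localCohomology I n).obj N) := by
  let Q : ℕᵒᵖ ⥤ ModuleCat.{u} R :=
    localCohomology.ringModIdeals (localCohomology.idealPowersDiagram I)
  let E : (ModuleCat.{u} R)ᵒᵖ ⥤ ModuleCat.{u} R := (Ext R (ModuleCat.{u} R) n).flip.obj N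
  suffices IsZero (colimit (Q.op ⋙ E)) from this.of_iso (colimitObjIsoColimitCompEvaluation _ N)
  refine isZero_colimit_of_forall_exists_map_eq_zero _ fun ⟨⟨t⟩⟩ ↦ ?_
  obtain ⟨J, hJt, hIJ, hJ⟩ := h t
  obtain ⟨s, hsJ⟩ := Ideal.exists_pow_le_of_le_radical_of_fg hIJ hI
  have hmaxJ : I ^ max t s ≤ J := (Ideal.pow_le_pow_right (le_max_right t s)).trans hsJ
  let φ : Opposite.op (max t s) ⟶ .op t := (homOfLE (le_max_left t s)).op
  let α : Q.obj (.op (max t s)) ⟶ .of R (R ⧸ J) := ModuleCat.ofHom (Submodule.factor hmaxJ)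
  let β : .of R (R ⧸ J) ⟶ Q.obj (.op t) := ModuleCat.ofHom (Submodule.factor hJt)
  have hφ : Q.map φ = α ≫ β := ModuleCat.hom_ext (Submodule.linearMap_qext _ rfl)
  have hβ : E.map β.op = 0 := hJ.eq_of_tgt _ _
  exact ⟨_, φ.op, by simp [hφ, hβ]⟩

end HomologicalAlgebra

section FrobeniusPower

open Limits Matrix

variable {R : Type u} [CommRing R]

/-- The Frobenius power `I^{[p^e]}`, generated by the `p^e`-th powers of the elements of `I`;
it is encoded as the extension of `I` along the `e`-fold Frobenius. -/
def frobeniusPower (p : ℕ) [ExpChar R p] (e : ℕ) (I : Ideal R) : Ideal R :=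
  I.map (iterateFrobenius R p e)

lemma frobeniusPower_le_pow (p : ℕ) [ExpChar R p] (e : ℕ) (I : Ideal R) :
    frobeniusPower p e I ≤ I ^ p ^ e :=
  Ideal.map_le_iff_le_comap.2 fun _ hr ↦ Ideal.pow_mem_pow hr _

lemma le_radical_frobeniusPower (p : ℕ) [ExpChar R p] (e : ℕ) (I : Ideal R) :
    I ≤ (frobeniusPower p e I).radical :=
  fun _ hr ↦ ⟨p ^ e, Ideal.mem_map_of_mem (iterateFrobenius R p e) hr⟩

lemma cross_pow_expChar_pow (p : ℕ) [ExpChar R p] (e : ℕ) (a b : Fin 3 → R) :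
    (a ^ p ^ e) ⨯₃ (b ^ p ^ e) = (a ⨯₃ b) ^ p ^ e := by
  ext i
  fin_cases i <;> simp [cross_apply, sub_pow_expChar_pow, mul_pow]

lemma frobeniusPower_span_range (p : ℕ) [ExpChar R p] (e : ℕ) {ι : Type*} (v : ι → R) :
    frobeniusPower p e (.span (Set.range v)) = .span (Set.range (v ^ p ^ e)) := by
  rw [frobeniusPower, Ideal.map_span, ← Set.range_comp]
  rfl

lemma isZero_localCohomology_of_forall_isZero_Ext_frobeniusPower (p : ℕ) [Fact p.Prime] [CharP R p]
    {I : Ideal R} (hI : I.FG) {n : ℕ} {N : ModuleCat.{u} R}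
    (h : ∀ e, IsZero
      (((Ext R (ModuleCat.{u} R) n).obj (.op (.of R (R ⧸ frobeniusPower p e I)))).obj N)) :
    IsZero ((localCohomology I n).obj N) :=
  isZero_localCohomology_of_forall_exists_isZero_Ext hI fun t ↦
    have ht : t ≤ p ^ t := (Nat.lt_pow_self (Fact.out : p.Prime).one_lt).le
    ⟨frobeniusPower p t I, (frobeniusPower_le_pow p t I).trans (Ideal.pow_le_pow_right ht),
      le_radical_frobeniusPower p t I, h t⟩

end FrobeniusPower

section HilbertBurch

open Limits Matrix

variable {R : Type u} [CommRing R] {a b : Fin 3 → R}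

lemma isSMulRegular_quotient_span_singleton_iff {x y : R} :
    IsSMulRegular (R ⧸ Ideal.span {x}) y ↔ ∀ s, x ∣ y * s → x ∣ s := by
  simp only [isSMulRegular_quotient_iff_mem_of_smul_mem, smul_eq_mul, Ideal.mem_span_singleton]

lemma isSMulRegular_quotient_span_singleton_pow {x y : R} (hx : IsSMulRegular R x)
    (hy : IsSMulRegular (R ⧸ Ideal.span {x}) y) (m : ℕ) :
    IsSMulRegular (R ⧸ Ideal.span {x ^ m}) y := by
  rw [isSMulRegular_quotient_span_singleton_iff] at hy ⊢
  induction m with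
  | zero => simp
  | succ m ih =>
    intro s hs
    obtain ⟨s, rfl⟩ := hy s ((Dvd.intro_left _ (pow_succ x m).symm).trans hs)
    obtain ⟨c, hc⟩ := hs
    rw [pow_succ']
    exact mul_dvd_mul_left x (ih s ⟨c, hx (by simp only [smul_eq_mul]; linear_combination hc)⟩)

lemma linearCombination_pair {M : Type*} [AddCommGroup M] [Module R M] (a b : M) (r : Fin 2 → R) :
    Fintype.linearCombination R ![a, b] r = r 0 • a + r 1 • b := by
  simp [Fintype.linearCombination_apply]

lemma injective_linearCombination_pair (h : IsSMulRegular R ((a ⨯₃ b) 2)) :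
    Function.Injective (Fintype.linearCombination R ![a, b]) := by
  refine (injective_iff_map_eq_zero _).2 fun r hr ↦ ?_
  rw [linearCombination_pair] at hr
  have hr0 : r 0 * a 0 + r 1 * b 0 = 0 := congrFun hr 0
  have hr1 : r 0 * a 1 + r 1 * b 1 = 0 := congrFun hr 1
  have hδ : (a ⨯₃ b) 2 = a 0 * b 1 - a 1 * b 0 := by simp only [cross_apply, cons_val]
  have h0 : r 0 = 0 := h.right_eq_zero_of_smul <| by
    rw [smul_eq_mul, hδ]
    linear_combination b 1 * hr0 - b 0 * hr1
  have h1 : r 1 = 0 := h.right_eq_zero_of_smul <| by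
    rw [smul_eq_mul, hδ]
    linear_combination a 0 * hr1 - a 1 * hr0
  exact funext (Fin.forall_fin_two.2 ⟨h0, h1⟩)

-- `c` and `v` are orthogonal to `δ`, so `c × v` is parallel to it; read off one coordinate.
lemma dvd_cross_of_dotProduct_eq_zero {c v δ : Fin 3 → R}
    (h : IsSMulRegular (R ⧸ Ideal.span {δ 2}) (δ 0)) (hc : c ⬝ᵥ δ = 0) (hv : v ⬝ᵥ δ = 0) :
    δ 2 ∣ (c ⨯₃ v) 2 := by
  have hpar : (c ⨯₃ v) ⨯₃ δ = 0 := by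
    rw [cross_cross_eq_smul_sub_smul, hc, hv, zero_smul, zero_smul, sub_zero]
  have hpar1 : (c ⨯₃ v) 2 * δ 0 - (c ⨯₃ v) 0 * δ 2 = 0 := congrFun hpar 1
  refine isSMulRegular_quotient_span_singleton_iff.1 h _ ⟨(c ⨯₃ v) 0, ?_⟩
  linear_combination hpar1

lemma cross_smul_eq_of_dotProduct_cross_eq_zero {c : Fin 3 → R} (hc : c ⬝ᵥ a ⨯₃ b = 0) :
    (a ⨯₃ b) 2 • c = (c ⨯₃ b) 2 • a - (c ⨯₃ a) 2 • b := by
  simp only [cross_apply, vec3_dotProduct, cons_val] at hc ⊢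
  refine funext (Fin.forall_fin_succ.2 ⟨?_, Fin.forall_fin_two.2 ⟨?_, ?_⟩⟩)
  · change (a 0 * b 1 - a 1 * b 0) * c 0 =
      (c 0 * b 1 - c 1 * b 0) * a 0 - (c 0 * a 1 - c 1 * a 0) * b 0
    ring
  · change (a 0 * b 1 - a 1 * b 0) * c 1 =
      (c 0 * b 1 - c 1 * b 0) * a 1 - (c 0 * a 1 - c 1 * a 0) * b 1
    ring
  · change (a 0 * b 1 - a 1 * b 0) * c 2 =
      (c 0 * b 1 - c 1 * b 0) * a 2 - (c 0 * a 1 - c 1 * a 0) * b 2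
    linear_combination hc

lemma exact_linearCombination_pair_cross (h : IsSMulRegular R ((a ⨯₃ b) 2))
    (h' : IsSMulRegular (R ⧸ Ideal.span {(a ⨯₃ b) 2}) ((a ⨯₃ b) 0)) :
    Function.Exact (Fintype.linearCombination R ![a, b])
      (Fintype.linearCombination R (a ⨯₃ b)) := by
  refine fun c ↦ ⟨fun (hc : c ⬝ᵥ a ⨯₃ b = 0) ↦ ?_, ?_⟩
  · obtain ⟨α, hα⟩ := dvd_cross_of_dotProduct_eq_zero h' hc (dot_cross_self a b)
    obtain ⟨β, hβ⟩ := dvd_cross_of_dotProduct_eq_zero h' hc (dot_self_cross a b)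
    have hcαβ : (a ⨯₃ b) 2 • c = (a ⨯₃ b) 2 • (α • a - β • b) := by
      rw [cross_smul_eq_of_dotProduct_cross_eq_zero hc, hα, hβ, smul_sub, mul_smul, mul_smul]
    have hc' : c = α • a - β • b := funext fun i ↦ h (congrFun hcαβ i)
    exact ⟨![α, -β], by simp [linearCombination_pair, hc', sub_eq_add_neg]⟩
  · rintro ⟨r, rfl⟩
    change Fintype.linearCombination R ![a, b] r ⬝ᵥ a ⨯₃ b = 0
    simp [linearCombination_pair]

lemma hasProjectiveDimensionLT_quotient_span_range_cross (h : IsSMulRegular R ((a ⨯₃ b) 2))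
    (h' : IsSMulRegular (R ⧸ Ideal.span {(a ⨯₃ b) 2}) ((a ⨯₃ b) 0)) :
    HasProjectiveDimensionLT (ModuleCat.of R (R ⧸ Ideal.span (Set.range (a ⨯₃ b)))) 3 := by
  rw [Ideal.span, ← Fintype.range_linearCombination]
  exact hasProjectiveDimensionLT_quotient_range (injective_linearCombination_pair h)
    (exact_linearCombination_pair_cross h h')

lemma isZero_localCohomology_span_range_cross (p : ℕ) [Fact p.Prime] [CharP R p]
    (h : IsSMulRegular R ((a ⨯₃ b) 2))
    (h' : IsSMulRegular (R ⧸ Ideal.span {(a ⨯₃ b) 2}) ((a ⨯₃ b) 0)) {n : ℕ} (hn : 3 ≤ n)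
    (N : ModuleCat.{u} R) :
    IsZero ((localCohomology (.span (Set.range (a ⨯₃ b))) n).obj N) := by
  refine isZero_localCohomology_of_forall_isZero_Ext_frobeniusPower p
    (Submodule.fg_span (Set.finite_range _)) fun e ↦ ?_
  obtain ⟨n, rfl⟩ := Nat.exists_eq_succ_of_ne_zero (Nat.ne_zero_of_lt hn)
  rw [frobeniusPower_span_range, ← cross_pow_expChar_pow]
  have hpow (i : Fin 3) : (a ^ p ^ e ⨯₃ b ^ p ^ e) i = (a ⨯₃ b) i ^ p ^ e :=
    congrFun (cross_pow_expChar_pow p e a b) i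
  have hreg : IsSMulRegular R ((a ^ p ^ e ⨯₃ b ^ p ^ e) 2) := by
    rw [hpow]
    exact h.pow _
  have hreg' : IsSMulRegular (R ⧸ Ideal.span {(a ^ p ^ e ⨯₃ b ^ p ^ e) 2})
      ((a ^ p ^ e ⨯₃ b ^ p ^ e) 0) := by
    rw [hpow, hpow]
    exact (isSMulRegular_quotient_span_singleton_pow h h' _).pow _
  have := hasProjectiveDimensionLT_quotient_span_range_cross hreg hreg'
  exact isZero_Ext_succ_of_hasProjectiveDimensionLT _ N 3 hn

end HilbertBurch

section MonomialOrder

open scoped MonomialOrder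

variable {σ K : Type*} [CommRing K] (m : MonomialOrder σ)

lemma isSMulRegular_of_isRegular_leadingCoeff {f : MvPolynomial σ K}
    (hf : IsRegular (m.leadingCoeff f)) : IsSMulRegular (MvPolynomial σ K) f := by
  refine isSMulRegular_iff_right_eq_zero_of_smul.2 fun g hg ↦ ?_
  have hlc : m.leadingCoeff f * m.leadingCoeff g = 0 := by
    rw [← m.leadingCoeff_mul_of_isRegular_left hf, ← smul_eq_mul f, hg, m.leadingCoeff_zero]
  exact m.leadingCoeff_eq_zero_iff.1 (hf.left.mul_left_eq_zero_iff.1 hlc)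

lemma isSMulRegular_quotient_span_singleton_of_disjoint_degree {f g : MvPolynomial σ K}
    (hf : IsUnit (m.leadingCoeff f)) (hg : IsRegular (m.leadingCoeff g))
    (hfg : Disjoint (m.degree f) (m.degree g)) :
    IsSMulRegular (MvPolynomial σ K ⧸ Ideal.span {f}) g := by
  rw [isSMulRegular_quotient_span_singleton_iff]
  intro s hs
  obtain ⟨q, r, rfl, -, hr⟩ := m.div_single hf s
  suffices hr0 : r = 0 by simp [hr0]
  by_contra hr0
  obtain ⟨t, ht⟩ : f ∣ g * r := by
    rwa [mul_add, ← mul_assoc, dvd_add_right (dvd_mul_left f _)] at hs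
  have ht0 : t ≠ 0 := by
    rintro rfl
    exact hr0 ((isSMulRegular_of_isRegular_leadingCoeff m hg).right_eq_zero_of_smul
      (by rw [smul_eq_mul, ht, mul_zero]))
  have hdeg : m.degree f + m.degree t = m.degree g + m.degree r := by
    rw [← m.degree_mul_of_isRegular_left hf.isRegular ht0,
      ← m.degree_mul_of_isRegular_left hg hr0, ht]
  refine hr _ (m.degree_mem_support hr0) fun i ↦ ?_
  have hi : m.degree f i + m.degree t i = m.degree g i + m.degree r i := DFunLike.congr_fun hdeg i
  have hmin : min (m.degree f i) (m.degree g i) = 0 :=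
    DFunLike.congr_fun (disjoint_iff.1 hfg) i
  lia

lemma degree_monomial_sub_monomial_of_lt [Nontrivial K] {c d : σ →₀ ℕ} (h : d ≺[m] c) :
    m.degree (monomial c (1 : K) - monomial d 1) = c := by
  classical
  rw [m.degree_sub_of_lt] <;> simp [m.degree_monomial, h]

lemma monic_monomial_sub_monomial_of_lt [Nontrivial K] {c d : σ →₀ ℕ} (h : d ≺[m] c) :
    m.Monic (monomial c (1 : K) - monomial d 1) := by
  classical
  rw [MonomialOrder.Monic, m.leadingCoeff_sub_of_lt, m.leadingCoeff_monomial]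
  simpa [m.degree_monomial]

end MonomialOrder

section LexOrder

open scoped MonomialOrder

lemma X_mul_X_eq_monomial {σ K : Type*} [CommSemiring K] (i j : σ) :
    (X i * X j : MvPolynomial σ K) = monomial (.single i 1 + .single j 1) 1 := by
  simp [X, monomial_mul]

variable {σ K : Type*} [LinearOrder σ] [WellFoundedGT σ] {i j k l : σ}

lemma single_add_single_lex_lt (hij : i < j) (hik : i < k) (hil : i < l) :
    .single k 1 + .single l 1 ≺[MonomialOrder.lex] .single i 1 + .single j 1 := by
  rw [MonomialOrder.lex_lt_iff, Finsupp.Lex.lt_iff]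
  refine ⟨i, fun r hr ↦ ?_, ?_⟩
  · simp [hr.ne', (hr.trans hij).ne', (hr.trans hik).ne', (hr.trans hil).ne']
  · simp [hij.ne', hik.ne', hil.ne']

variable [CommRing K] [Nontrivial K]

lemma degree_lex_X_mul_X_sub_X_mul_X (hij : i < j) (hik : i < k) (hil : i < l) :
    MonomialOrder.lex.degree (X i * X j - X k * X l : MvPolynomial σ K) =
      .single i 1 + .single j 1 := by
  simp only [X_mul_X_eq_monomial]
  exact degree_monomial_sub_monomial_of_lt _ (single_add_single_lex_lt hij hik hil)

lemma monic_lex_X_mul_X_sub_X_mul_X (hij : i < j) (hik : i < k) (hil : i < l) :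
    MonomialOrder.lex.Monic (X i * X j - X k * X l : MvPolynomial σ K) := by
  simp only [X_mul_X_eq_monomial]
  exact monic_monomial_sub_monomial_of_lt _ (single_add_single_lex_lt hij hik hil)

lemma isSMulRegular_X_mul_X_sub_X_mul_X (hij : i < j) (hik : i < k) (hil : i < l) :
    IsSMulRegular (MvPolynomial σ K) (X i * X j - X k * X l : MvPolynomial σ K) := by
  refine isSMulRegular_of_isRegular_leadingCoeff .lex ?_
  rw [monic_lex_X_mul_X_sub_X_mul_X hij hik hil]
  exact isRegular_one

lemma isSMulRegular_quotient_span_X_mul_X_sub_X_mul_X {i' j' k' l' : σ}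
    (hij : i < j) (hik : i < k) (hil : i < l) (hij' : i' < j') (hik' : i' < k') (hil' : i' < l')
    (hdisj : Disjoint ({i, j} : Finset σ) {i', j'}) :
    IsSMulRegular
      (MvPolynomial σ K ⧸ Ideal.span {(X i * X j - X k * X l : MvPolynomial σ K)})
      (X i' * X j' - X k' * X l' : MvPolynomial σ K) := by
  refine isSMulRegular_quotient_span_singleton_of_disjoint_degree .lex ?_ ?_ ?_
  · rw [monic_lex_X_mul_X_sub_X_mul_X hij hik hil]
    exact isUnit_one
  · rw [monic_lex_X_mul_X_sub_X_mul_X hij' hik' hil']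
    exact isRegular_one
  · rw [degree_lex_X_mul_X_sub_X_mul_X hij hik hil, degree_lex_X_mul_X_sub_X_mul_X hij' hik' hil',
      Finsupp.disjoint_iff]
    simpa [Finsupp.support_add_eq, Finsupp.support_single, hij.ne, hij'.ne] using hdisj

end LexOrder

section GenericMatrix

open Matrix

theorem localCohomology_three_of_minors_eq_zero_charP_general
    {K : Type u} [CommRing K] (p : ℕ) [Fact p.Prime] [CharP K p] {n : ℕ} (hn : 3 ≤ n)
    (N : ModuleCat.{u} (MvPolynomial (Fin 6) K)) :
    let R := MvPolynomial (Fin 6) K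
    let u : R := X 0; let v : R := X 1; let w : R := X 2
    let x : R := X 3; let y : R := X 4; let z : R := X 5
    let I : Ideal R := Ideal.span {v * z - w * y, w * x - u * z, u * y - v * x}
    Subsingleton ((localCohomology I n).obj N) := by
  intro R u v w x y z I
  have : Nontrivial K := CharP.nontrivial_of_char_ne_one (Fact.out : p.Prime).ne_one
  have hI : I = .span (Set.range (![u, v, w] ⨯₃ ![x, y, z])) := by
    simp only [I, cross_apply, range_cons, range_empty, Set.union_empty, Set.singleton_union,
      cons_val]
  have hreg : IsSMulRegular R ((![u, v, w] ⨯₃ ![x, y, z]) 2) :=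
    isSMulRegular_X_mul_X_sub_X_mul_X (by decide) (by decide) (by decide)
  have hreg' : IsSMulRegular (R ⧸ Ideal.span {(![u, v, w] ⨯₃ ![x, y, z]) 2})
      ((![u, v, w] ⨯₃ ![x, y, z]) 0) := by
    apply isSMulRegular_quotient_span_X_mul_X_sub_X_mul_X <;> decide
  rw [hI]
  exact ModuleCat.subsingleton_of_isZero (isZero_localCohomology_span_range_cross p hreg hreg' hn N)

end GenericMatrix

theorem localCohomology_three_of_minors_eq_zero_charP
    (p : ℕ) [Fact p.Prime] :
    let R := MvPolynomial (Fin 6) (ZMod p)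
    let u : R := X 0; let v : R := X 1; let w : R := X 2
    let x : R := X 3; let y : R := X 4; let z : R := X 5
    let I : Ideal R := Ideal.span {v * z - w * y, w * x - u * z, u * y - v * x}
    Subsingleton ((localCohomology I 3).obj (ModuleCat.of R R)) :=
  localCohomology_three_of_minors_eq_zero_charP_general p le_rfl _
end

section
/- Let R = ℂ[u,v,w,x,y,z] and let I be the ideal of 2×2 minors of the matrix with rows (u,v,w), (x,y,z). Then H^3_I(R) ≠ 0. In particular, I cannot be generated up to radical by 2 elements. -/
/-!
STATEMENT 7: Let `R = ℂ[u,v,w,x,y,z]` and `I` the ideal of `2×2` minors of the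
matrix with rows `(u,v,w)`, `(x,y,z)`.  Then `H^3_I(R) ≠ 0`; in particular `I`
cannot be generated up to radical by `2` elements.
-/

open CategoryTheory MvPolynomial

/-!
Suppose `H³_I(S) = 0`. Let `a` and `b` be the rows of the matrix and `m = a ⨯₃ b`. Local cohomology
is the colimit of `Ext³(S ⧸ I ^ t, S)`, so every class in `Ext³(S ⧸ I ^ 2, S)` dies in some
`Ext³(S ⧸ I ^ t, S)`. The ideal `I` has a Hilbert–Burch resolution with relations `a` and `b`, which
yields a resolution of `S ⧸ I ^ 2` of length three ending in `S`, and hence a tautological class.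
The Koszul complex of the powers `m i ^ t` maps to this resolution over `S ⧸ I ^ t → S ⧸ I ^ 2`; in
degree three the map is multiplication by a power of `m 0 * m 1 * m 2`. The vanishing of the class
would give `(m 0 * m 1 * m 2) ^ n ∈ (m 0 ^ (n + 1), m 1 ^ (n + 1), m 2 ^ (n + 1))` for some `n`.

In characteristic zero this is impossible. Let `D i` be the differential operator obtained from
`m i` by replacing the variables with partial derivatives, the adjoint of multiplication by `m i`
for the apolar pairing. By Cayley's identity `D i` lowers the exponent of `m i` in a monomial in the
minors, up to a positive integer factor. Hence the pairing with `(m 0 * m 1 * m 2) ^ n` vanishes on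
the ideal `(m 0 ^ (n + 1), m 1 ^ (n + 1), m 2 ^ (n + 1))`, but not at `(m 0 * m 1 * m 2) ^ n`.

If `I` had the same radical as `(f, g)`, then `f` and `g` would be coprime because two of the minors
are. So `f ^ n, g ^ n` would be regular sequences, whose Koszul resolutions of length two force
`H³_I = 0`.
-/

namespace MinorsLocalCohomology

open Limits Opposite

universe v u

section Comparison

variable {C : Type u} [Category.{v} C] [Abelian C] {N : C} {K L : ChainComplex C ℕ}

theorem exists_lift_augmentation [∀ n, Projective (K.X n)] (Q : ProjectiveResolution N)
    (ε : K.X 0 ⟶ N) (hε : K.d 1 0 ≫ ε = 0) :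
    ∃ φ : K ⟶ Q.complex, φ.f 0 ≫ Q.π.f 0 = ε := by
  obtain ⟨φ₀, hφ₀⟩ : ∃ φ₀ : K.X 0 ⟶ Q.complex.X 0, φ₀ ≫ Q.π.f 0 = ε :=
    Projective.factors (X := ((ChainComplex.single₀ C).obj N).X 0) ε (Q.π.f 0)
  refine ⟨ChainComplex.mkHom _ _ φ₀ (Q.exact₀.liftFromProjective (K.d 1 0 ≫ φ₀) ?_)
    (Q.exact₀.liftFromProjective_comp _ _) fun n ⟨g, g', w⟩ =>
      ⟨(Q.exact_succ n).liftFromProjective (K.d (n + 2) (n + 1) ≫ g') ?_,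
        (Q.exact_succ n).liftFromProjective_comp _ _⟩, hφ₀⟩
  · exact (Category.assoc _ _ _).trans ((congrArg _ hφ₀).trans hε)
  · simp [w]

theorem nonempty_homotopy_zero [∀ n, Projective (K.X n)] {Q : ProjectiveResolution N}
    (φ : K ⟶ Q.complex) (hφ : φ.f 0 ≫ Q.π.f 0 = 0) : Nonempty (Homotopy φ 0) := by
  obtain ⟨h₀, hh₀⟩ : ∃ h₀, h₀ ≫ Q.complex.d 1 0 = φ.f 0 :=
    ⟨_, Q.exact₀.liftFromProjective_comp (φ.f 0) hφ⟩
  obtain ⟨h₁, hh₁⟩ : ∃ h₁, h₁ ≫ Q.complex.d 2 1 = φ.f 1 - K.d 1 0 ≫ h₀ :=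
    ⟨_, (Q.exact_succ 0).liftFromProjective_comp _ (by simp [Preadditive.sub_comp, hh₀])⟩
  exact ⟨Homotopy.mkInductive _ h₀ hh₀.symm h₁ (by simp [hh₁]) fun n ⟨g, g', w⟩ =>
    ⟨(Q.exact_succ (n + 1)).liftFromProjective (φ.f (n + 2) - K.d _ _ ≫ g') (by simp [w]),
      by rw [ShortComplex.Exact.liftFromProjective_comp, add_sub_cancel]⟩⟩

theorem comp_eq_of_homotopy {M : C} {φ ψ : K ⟶ L} (h : Homotopy φ ψ) (n : ℕ)
    (z : L.X (n + 1) ⟶ M) (hz : L.d (n + 2) (n + 1) ≫ z = 0) :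
    φ.f (n + 1) ≫ z = K.d (n + 1) n ≫ h.hom n (n + 1) ≫ z + ψ.f (n + 1) ≫ z := by
  rw [h.comm (n + 1), dNext_eq _ (show (ComplexShape.down ℕ).Rel (n + 1) n from rfl),
    prevD_eq _ (show (ComplexShape.down ℕ).Rel (n + 2) (n + 1) from rfl)]
  simp [hz]

end Comparison

section ExtClass

variable {R : Type v} [CommRing R] {C : Type u} [Category.{v} C] [Abelian C] [Linear R C]
  {M N N' : C}

/-- The functor `X ↦ Hom(X, M)`, with values in the opposite category so as to be covariant; its
left derived functors are `Ext R C n _ M`. -/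
noncomputable abbrev homRightOp (R : Type v) [CommRing R] [Linear R C] (M : C) :
    C ⥤ (ModuleCat.{v} R)ᵒᵖ :=
  ((linearYoneda R C).obj M).rightOp

/-- The complex of modules `Hom(K, M)`, as a chain complex in the opposite category. -/
noncomputable abbrev homComplex (R : Type v) [CommRing R] [Linear R C] (K : ChainComplex C ℕ)
    (M : C) : ChainComplex (ModuleCat.{v} R)ᵒᵖ ℕ :=
  ((homRightOp R M).mapHomologicalComplex _).obj K

/-- A cochain `K.X n ⟶ M` seen as an element of `Hom(K, M)`, that is as a map from `R`. -/
noncomputable def homCochain (R : Type v) [CommRing R] [Linear R C] {K : ChainComplex C ℕ} {n : ℕ}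
    (z : K.X n ⟶ M) : (homComplex R K M).X n ⟶ op (ModuleCat.of R R) :=
  (ModuleCat.ofHom (LinearMap.toSpanSingleton R (K.X n ⟶ M) z)).op

theorem homCochain_unop_one {K : ChainComplex C ℕ} {n : ℕ} (z : K.X n ⟶ M) :
    (homCochain R z).unop (1 : R) = z :=
  one_smul R z

theorem d_comp_homCochain {K : ChainComplex C ℕ} (m : ℕ) {n : ℕ} (z : K.X n ⟶ M) :
    (homComplex R K M).d m n ≫ homCochain R z = homCochain R (K.d m n ≫ z) := by
  apply Quiver.Hom.unop_inj
  ext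
  exact Linear.comp_smul _ _ _ _ _ _

theorem map_comp_homCochain {K L : ChainComplex C ℕ} (φ : L ⟶ K) {n : ℕ} (z : K.X n ⟶ M) :
    (((homRightOp R M).mapHomologicalComplex _).map φ).f n ≫ homCochain R z =
      homCochain R (φ.f n ≫ z) := by
  apply Quiver.Hom.unop_inj
  ext
  exact Linear.comp_smul _ _ _ _ _ _

theorem d_comp_homCochain_eq_zero {K : ChainComplex C ℕ} {m n : ℕ} (z : K.X n ⟶ M)
    (hz : K.d m n ≫ z = 0) : (homComplex R K M).d m n ≫ homCochain R z = 0 := by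
  rw [d_comp_homCochain, hz]
  apply Quiver.Hom.unop_inj
  ext
  exact smul_zero (A := K.X m ⟶ M) _

/-- The cohomology class of a cocycle `z : K.X n ⟶ M` of `Hom(K, M)`. -/
noncomputable def homClass (R : Type v) [CommRing R] [Linear R C] {K : ChainComplex C ℕ} {n : ℕ}
    (z : K.X n ⟶ M) (hz : K.d (n + 1) n ≫ z = 0) :
    (homComplex R K M).homology n ⟶ op (ModuleCat.of R R) :=
  (homComplex R K M).homologyι n ≫
    (homComplex R K M).descOpcycles (homCochain R z) (n + 1) (by simp)
      (d_comp_homCochain_eq_zero z hz)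

theorem homologyMap_comp_homClass {K L : ChainComplex C ℕ} (φ : L ⟶ K) {n : ℕ} (z : K.X n ⟶ M)
    (hz : K.d (n + 1) n ≫ z = 0) :
    HomologicalComplex.homologyMap (((homRightOp R M).mapHomologicalComplex _).map φ) n ≫
        homClass R z hz =
      homClass R (φ.f n ≫ z) (by rw [← φ.comm_assoc, hz, comp_zero]) := by
  unfold homClass
  rw [HomologicalComplex.homologyι_naturality_assoc,
    HomologicalComplex.opcyclesMap_comp_descOpcycles]
  congr 2
  exact map_comp_homCochain _ _

theorem exists_eq_d_comp_of_homClass_eq_zero {K : ChainComplex C ℕ} {n : ℕ} (z : K.X (n + 1) ⟶ M)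
    (hz : K.d (n + 2) (n + 1) ≫ z = 0) (h : homClass R z hz = 0) :
    ∃ y : K.X n ⟶ M, z = K.d (n + 1) n ≫ y := by
  have hex : (ShortComplex.mk _ _
      ((homComplex R K M).homologyι_comp_fromOpcycles (n + 1) n)).Exact :=
    ShortComplex.exact_of_f_is_kernel _ ((homComplex R K M).homologyIsKernel (n + 1) n (by simp))
  have hfactor := hex.comp_descToInjective _ h
  have hz' : homCochain R z = (homComplex R K M).d (n + 1) n ≫ hex.descToInjective _ h := by
    rw [← (homComplex R K M).p_fromOpcycles, Category.assoc, hfactor,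
      HomologicalComplex.p_descOpcycles]
  refine ⟨(hex.descToInjective _ h).unop (1 : R), ?_⟩
  exact (homCochain_unop_one (R := R) z).symm.trans (congrArg (fun t ↦ t.unop (1 : R)) hz')

variable [EnoughProjectives C]

/-- The element of `Ext` represented by a cocycle of a projective resolution. -/
noncomputable def extClass (R : Type v) [CommRing R] [Linear R C] (P : ProjectiveResolution N)
    {n : ℕ} (z : P.complex.X n ⟶ M) (hz : P.complex.d (n + 1) n ≫ z = 0) :
    ((Ext R C n).obj (op N)).obj M :=
  ((P.isoLeftDerivedObj (homRightOp R M) n).hom ≫ homClass R z hz).unop (1 : R)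

theorem ext_map_extClass (f : N' ⟶ N) (P : ProjectiveResolution N) (P' : ProjectiveResolution N')
    (φ : P'.complex ⟶ P.complex) (hφ : φ.f 0 ≫ P.π.f 0 = P'.π.f 0 ≫ f) {n : ℕ}
    (z : P.complex.X n ⟶ M) (hz : P.complex.d (n + 1) n ≫ z = 0) :
    (((Ext R C n).map f.op).app M) (extClass R P z hz) =
      extClass R P' (φ.f n ≫ z) (by rw [← φ.comm_assoc, hz, comp_zero]) := by
  have hnat := ProjectiveResolution.isoLeftDerivedObj_hom_naturality_assoc f P' P φ hφ
    (homRightOp R M) n (homClass R z hz)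
  exact congrArg (fun t ↦ t.unop (1 : R))
    (hnat.trans (congrArg _ (homologyMap_comp_homClass φ z hz)))

theorem exists_eq_d_comp_of_extClass_eq_zero (P : ProjectiveResolution N) {n : ℕ}
    (z : P.complex.X (n + 1) ⟶ M) (hz : P.complex.d (n + 2) (n + 1) ≫ z = 0)
    (h : extClass R P z hz = 0) : ∃ y : P.complex.X n ⟶ M, z = P.complex.d (n + 1) n ≫ y := by
  have hcomp : (P.isoLeftDerivedObj (homRightOp R M) (n + 1)).hom ≫ homClass R z hz = 0 := by
    apply Quiver.Hom.unop_inj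
    ext
    exact h
  exact exists_eq_d_comp_of_homClass_eq_zero (R := R) z hz
    ((Iso.cancel_iso_hom_left (P.isoLeftDerivedObj (homRightOp R M) (n + 1)) _ 0).1
      (hcomp.trans comp_zero.symm))

theorem exists_comp_eq_d_comp_of_ext_map_extClass_eq_zero (f : N' ⟶ N)
    (P : ProjectiveResolution N) {K : ChainComplex C ℕ} [∀ n, Projective (K.X n)]
    (ε : K.X 0 ⟶ N') (hε : K.d 1 0 ≫ ε = 0) (ψ : K ⟶ P.complex)
    (hψ : ψ.f 0 ≫ P.π.f 0 = ε ≫ f) {n : ℕ} (z : P.complex.X (n + 1) ⟶ M)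
    (hz : P.complex.d (n + 2) (n + 1) ≫ z = 0)
    (h : (((Ext R C (n + 1)).map f.op).app M) (extClass R P z hz) = 0) :
    ∃ y : K.X n ⟶ M, ψ.f (n + 1) ≫ z = K.d (n + 1) n ≫ y := by
  let P' := projectiveResolution N'
  let φ := ProjectiveResolution.lift f P' P
  obtain ⟨χ, hχ⟩ := exists_lift_augmentation P' ε hε
  have hφ : φ.f 0 ≫ P.π.f 0 = P'.π.f 0 ≫ f := ProjectiveResolution.lift_commutes_zero f P' P
  obtain ⟨H⟩ : Nonempty (Homotopy (ψ - χ ≫ φ) 0) := by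
    refine nonempty_homotopy_zero _ ?_
    rw [HomologicalComplex.sub_f_apply, HomologicalComplex.comp_f, Preadditive.sub_comp,
      Category.assoc, hφ]
    exact sub_eq_zero.2 (hψ.trans (by rw [← hχ]; exact Category.assoc _ _ _))
  obtain ⟨y, hy⟩ := exists_eq_d_comp_of_extClass_eq_zero (R := R) P' (φ.f (n + 1) ≫ z) _
    ((ext_map_extClass f P P' φ hφ z hz).symm.trans h)
  have hH := comp_eq_of_homotopy H n z hz
  refine ⟨H.hom n (n + 1) ≫ z + χ.f n ≫ y, ?_⟩
  rw [Preadditive.comp_add, ← χ.comm_assoc, ← hy]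
  simpa [Preadditive.sub_comp, sub_eq_iff_eq_add] using hH

theorem isZero_ext_of_isZero_X (P : ProjectiveResolution N) {n : ℕ}
    (h : IsZero (P.complex.X n)) : IsZero (((Ext R C n).obj (op N)).obj M) := by
  refine IsZero.of_iso ?_ (P.isoExt n M)
  rw [← HomologicalComplex.exactAt_iff_isZero_homology, HomologicalComplex.exactAt_iff]
  refine ShortComplex.exact_of_isZero_X₂ _ ?_
  rw [IsZero.iff_id_eq_zero]
  ext x
  exact h.eq_of_src (C := C) _ _

end ExtClass

section LocalCohomology

variable {R : Type u} [CommRing R]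

/-- The surjection `R ⧸ J ⟶ R ⧸ K` induced by an inclusion `J ≤ K` of ideals. -/
noncomputable abbrev quotientMap {J K : Ideal R} (h : J ≤ K) :
    ModuleCat.of R (R ⧸ J) ⟶ ModuleCat.of R (R ⧸ K) :=
  ModuleCat.ofHom (Submodule.mapQ _ _ LinearMap.id h)

theorem quotientMap_comp {J K L : Ideal R} (h : J ≤ K) (h' : K ≤ L) :
    quotientMap h ≫ quotientMap h' = quotientMap (h.trans h') := by
  ext
  rfl

/-- The directed system `t ↦ Ext ^ n (R ⧸ I ^ t, M)`, whose colimit is `H ^ n _ I (M)`. -/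
noncomputable abbrev extPowDiagram (I : Ideal R) (n : ℕ) (M : ModuleCat.{u} R) :
    (ℕᵒᵖ)ᵒᵖ ⥤ ModuleCat.{u} R :=
  localCohomology.diagram (localCohomology.idealPowersDiagram I) n ⋙ (evaluation _ _).obj M

/-- Local cohomology of a module is the colimit of `extPowDiagram`. -/
noncomputable def localCohomologyObjIso (I : Ideal R) (n : ℕ) (M : ModuleCat.{u} R) :
    (localCohomology I n).obj M ≅ colimit (extPowDiagram I n M) :=
  colimitObjIsoColimitCompEvaluation
    (localCohomology.diagram (localCohomology.idealPowersDiagram I) n) M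

theorem exists_ext_map_eq_zero_of_subsingleton (I : Ideal R) (n : ℕ) (M : ModuleCat.{u} R)
    (h : Subsingleton ((localCohomology I n).obj M)) (t : ℕ)
    (e : ((Ext R (ModuleCat.{u} R) n).obj (op (ModuleCat.of R (R ⧸ I ^ t)))).obj M) :
    ∃ (s : ℕ) (hts : t ≤ s), ((Ext R (ModuleCat.{u} R) n).map
      (quotientMap (Ideal.pow_le_pow_right (I := I) hts)).op).app M e = 0 := by
  have : Subsingleton (colimit (extPowDiagram I n M) : ModuleCat R) :=
    (localCohomologyObjIso I n M).toLinearEquiv.symm.toEquiv.subsingleton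
  have := preservesFilteredColimitsOfSize_shrink.{0, u, 0, u} (forget (ModuleCat.{u} R))
  obtain ⟨s, i, hi⟩ := Concrete.colimit_rep_eq_zero R (extPowDiagram I n M) (op (op t)) e
    (Subsingleton.elim _ _)
  exact ⟨s.unop.unop, i.unop.unop.down.down, hi⟩

theorem subsingleton_localCohomology_of_isZero_ext (I : Ideal R) (n : ℕ) (M : ModuleCat.{u} R)
    (h : ∀ t, ∃ s, t ≤ s ∧ ∃ J, I ^ s ≤ J ∧ J ≤ I ^ t ∧
      IsZero (((Ext R (ModuleCat.{u} R) n).obj (op (ModuleCat.of R (R ⧸ J)))).obj M)) :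
    Subsingleton ((localCohomology I n).obj M) := by
  suffices Subsingleton (colimit (extPowDiagram I n M) : ModuleCat R) from
    (localCohomologyObjIso I n M).toLinearEquiv.toEquiv.subsingleton
  refine subsingleton_of_forall_eq 0 fun x ↦ ?_
  have := preservesFilteredColimitsOfSize_shrink.{0, u, 0, u} (forget (ModuleCat.{u} R))
  obtain ⟨t, e, rfl⟩ := Concrete.colimit_exists_rep (extPowDiagram I n M) x
  obtain ⟨s, hts, J, hsJ, hJt, hJ⟩ := h t.unop.unop
  let i : t ⟶ op (op s) := (homOfLE hts).op.op
  have hi : (extPowDiagram I n M).map i = 0 := by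
    change ((Ext R (ModuleCat.{u} R) n).map (quotientMap (hsJ.trans hJt)).op).app M = 0
    rw [← quotientMap_comp hsJ hJt, op_comp, Functor.map_comp, NatTrans.comp_app,
      hJ.eq_zero_of_tgt (((Ext R (ModuleCat.{u} R) n).map (quotientMap hJt).op).app M),
      zero_comp]
  rw [← colimit.w (extPowDiagram I n M) i, hi, zero_comp]
  rfl

end LocalCohomology

section LengthThree

open ZeroObject

variable {C : Type u} [Category.{v} C] [Abelian C] {N : C} {X₀ X₁ X₂ X₃ : C}

/-- A complex of projectives resolves `N` if it becomes exact when augmented over `N`. -/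
noncomputable def resolutionOfExact (K : ChainComplex C ℕ) [∀ n, Projective (K.X n)]
    (ε : K.X 0 ⟶ N) [Epi ε] (w : K.d 1 0 ≫ ε = 0) (h₀ : (ShortComplex.mk _ _ w).Exact)
    (h : ∀ n, K.ExactAt (n + 1)) : ProjectiveResolution N where
  complex := K
  π := (ChainComplex.toSingle₀Equiv _ _).symm ⟨ε, w⟩
  quasiIso := ⟨fun n => by
    cases n
    · rw [ChainComplex.quasiIsoAt₀_iff,
        ShortComplex.quasiIso_iff_of_zeros' _ (K.shape _ _ (by simp)) rfl rfl]
      refine (ShortComplex.exact_and_epi_g_iff_of_iso (S₂ := ShortComplex.mk _ _ w) ?_).2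
        ⟨h₀, ‹Epi ε›⟩
      refine ShortComplex.isoMk (Iso.refl _) (Iso.refl _) (Iso.refl _) ?_ ?_
      · exact (Category.id_comp _).trans (Category.comp_id _).symm
      · refine (Category.id_comp _).trans (Eq.trans ?_ (Category.comp_id _).symm)
        exact (ChainComplex.toSingle₀Equiv_symm_apply_f_zero ε w).symm
    · rw [quasiIsoAt_iff_exactAt']
      · apply h
      · apply ChainComplex.exactAt_succ_single_obj⟩

/-- The objects of `lengthThree`. -/
noncomputable def lengthThreeX (X₀ X₁ X₂ X₃ : C) : ℕ → C
  | 0 => X₀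
  | 1 => X₁
  | 2 => X₂
  | 3 => X₃
  | _ + 4 => 0

/-- The differentials of `lengthThree`. -/
noncomputable def lengthThreeD (d₁ : X₁ ⟶ X₀) (d₂ : X₂ ⟶ X₁) (d₃ : X₃ ⟶ X₂) :
    ∀ n, lengthThreeX X₀ X₁ X₂ X₃ (n + 1) ⟶ lengthThreeX X₀ X₁ X₂ X₃ n
  | 0 => d₁
  | 1 => d₂
  | 2 => d₃
  | _ + 3 => 0

/-- The complex `X₃ ⟶ X₂ ⟶ X₁ ⟶ X₀` in degrees `0` to `3`, extended by zero. -/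
noncomputable def lengthThree (d₁ : X₁ ⟶ X₀) (d₂ : X₂ ⟶ X₁) (d₃ : X₃ ⟶ X₂)
    (h₁ : d₂ ≫ d₁ = 0) (h₂ : d₃ ≫ d₂ = 0) : ChainComplex C ℕ :=
  ChainComplex.of (lengthThreeX X₀ X₁ X₂ X₃) (lengthThreeD d₁ d₂ d₃) fun
    | 0 => h₁
    | 1 => h₂
    | _ + 2 => zero_comp

variable (d₁ : X₁ ⟶ X₀) (d₂ : X₂ ⟶ X₁) (d₃ : X₃ ⟶ X₂) (h₁ : d₂ ≫ d₁ = 0) (h₂ : d₃ ≫ d₂ = 0)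

instance [Projective X₀] [Projective X₁] [Projective X₂] [Projective X₃] (n : ℕ) :
    Projective ((lengthThree d₁ d₂ d₃ h₁ h₂).X n) :=
  match n with
  | 0 => inferInstanceAs (Projective X₀)
  | 1 => inferInstanceAs (Projective X₁)
  | 2 => inferInstanceAs (Projective X₂)
  | 3 => inferInstanceAs (Projective X₃)
  | _ + 4 => inferInstanceAs (Projective (0 : C))

theorem lengthThree_d (n : ℕ) :
    (lengthThree d₁ d₂ d₃ h₁ h₂).d (n + 1) n = lengthThreeD d₁ d₂ d₃ n :=
  ChainComplex.of_d _ _ _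

/-- The morphism of complexes `lengthThree` with the given components in degrees `0` to `3`. -/
noncomputable def lengthThreeMap {Y₀ Y₁ Y₂ Y₃ : C} {e₁ : Y₁ ⟶ Y₀} {e₂ : Y₂ ⟶ Y₁} {e₃ : Y₃ ⟶ Y₂}
    {h₁ : d₂ ≫ d₁ = 0} {h₂ : d₃ ≫ d₂ = 0} {k₁ : e₂ ≫ e₁ = 0} {k₂ : e₃ ≫ e₂ = 0}
    (f₀ : X₀ ⟶ Y₀) (f₁ : X₁ ⟶ Y₁) (f₂ : X₂ ⟶ Y₂) (f₃ : X₃ ⟶ Y₃)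
    (w₁ : f₁ ≫ e₁ = d₁ ≫ f₀) (w₂ : f₂ ≫ e₂ = d₂ ≫ f₁) (w₃ : f₃ ≫ e₃ = d₃ ≫ f₂) :
    lengthThree d₁ d₂ d₃ h₁ h₂ ⟶ lengthThree e₁ e₂ e₃ k₁ k₂ where
  f
    | 0 => f₀
    | 1 => f₁
    | 2 => f₂
    | 3 => f₃
    | _ + 4 => (0 : (0 : C) ⟶ 0)
  comm' i j hij := by
    obtain rfl : j + 1 = i := hij
    rw [lengthThree_d, lengthThree_d]
    match j with
    | 0 => exact w₁
    | 1 => exact w₂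
    | 2 => exact w₃
    | _ + 3 => exact (isZero_zero C).eq_of_src _ _

theorem lengthThree_exactAt [Mono d₃] (e₁ : (ShortComplex.mk d₂ d₁ h₁).Exact)
    (e₂ : (ShortComplex.mk d₃ d₂ h₂).Exact) (n : ℕ) :
    (lengthThree d₁ d₂ d₃ h₁ h₂).ExactAt (n + 1) := by
  rw [HomologicalComplex.exactAt_iff' _ (n + 2) (n + 1) n (by simp) (by simp)]
  suffices ∀ w, (ShortComplex.mk (lengthThreeD d₁ d₂ d₃ (n + 1)) (lengthThreeD d₁ d₂ d₃ n)
      w).Exact by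
    simp only [HomologicalComplex.sc', HomologicalComplex.shortComplexFunctor', lengthThree_d]
    exact this _
  intro w
  match n with
  | 0 => exact e₁
  | 1 => exact e₂
  | 2 => exact (ShortComplex.exact_iff_mono _ rfl).2 ‹_›
  | _ + 3 => exact ShortComplex.exact_of_isZero_X₂ _ (isZero_zero C)

/-- The resolution given by an exact sequence `0 ⟶ X₃ ⟶ X₂ ⟶ X₁ ⟶ X₀ ⟶ N ⟶ 0` of projectives. -/
noncomputable abbrev lengthThreeResolution [Projective X₀] [Projective X₁] [Projective X₂]
    [Projective X₃] [Mono d₃] (ε : X₀ ⟶ N) [Epi ε] (w : d₁ ≫ ε = 0)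
    (e₀ : (ShortComplex.mk d₁ ε w).Exact) (e₁ : (ShortComplex.mk d₂ d₁ h₁).Exact)
    (e₂ : (ShortComplex.mk d₃ d₂ h₂).Exact) : ProjectiveResolution N :=
  have hd : (lengthThree d₁ d₂ d₃ h₁ h₂).d 1 0 = d₁ := lengthThree_d ..
  have : Epi (C := C) (X := (lengthThree d₁ d₂ d₃ h₁ h₂).X 0) ε := ‹Epi ε›
  resolutionOfExact (lengthThree d₁ d₂ d₃ h₁ h₂) ε (by rw [hd]; exact w)
    (by simp only [hd]; exact e₀) (lengthThree_exactAt d₁ d₂ d₃ h₁ h₂ e₁ e₂)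

end LengthThree

section SymmetricSquare

open Matrix RingTheory.Sequence

section

variable {S : Type*} [CommRing S]

theorem isSMulRegular_quotient_ideal_iff {J : Ideal S} {b : S} :
    IsSMulRegular (S ⧸ (J • ⊤ : Submodule S S)) b ↔ ∀ q, b * q ∈ J → q ∈ J := by
  rw [smul_eq_mul, Ideal.mul_top]
  exact isSMulRegular_quotient_iff_mem_of_smul_mem J b

theorem isWeaklyRegular_pair_iff {a b : S} :
    IsWeaklyRegular S [a, b] ↔ (∀ q, a * q = 0 → q = 0) ∧ ∀ q, a ∣ b * q → a ∣ q := by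
  rw [← List.singleton_append, isWeaklyRegular_append_iff, isWeaklyRegular_singleton_iff,
    isWeaklyRegular_singleton_iff, isSMulRegular_quotient_ideal_iff, Ideal.ofList_singleton,
    isSMulRegular_iff_right_eq_zero_of_smul]
  simp only [Ideal.mem_span_singleton, smul_eq_mul]

theorem isWeaklyRegular_triple_iff {a b c : S} :
    IsWeaklyRegular S [a, b, c] ↔ IsWeaklyRegular S [a, b] ∧
      ∀ q, c * q ∈ Ideal.span {a, b} → q ∈ Ideal.span {a, b} := by
  rw [show [a, b, c] = [a, b] ++ [c] from rfl, isWeaklyRegular_append_iff,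
    isWeaklyRegular_singleton_iff, isSMulRegular_quotient_ideal_iff, Ideal.ofList_cons,
    Ideal.ofList_singleton, ← Ideal.span_insert]

theorem exists_of_mul_add_mul_eq_zero {a b : S} (h : IsWeaklyRegular S [a, b]) {p q : S}
    (hpq : a * p + b * q = 0) : ∃ c, p = c * b ∧ q = -(c * a) := by
  obtain ⟨ha, hb⟩ := isWeaklyRegular_pair_iff.1 h
  obtain ⟨c, rfl⟩ := hb q ⟨-p, by linear_combination hpq⟩
  exact ⟨-c, sub_eq_zero.1 (ha _ (by linear_combination hpq)), by ring⟩

theorem exists_eq_smul_of_cross_eq_zero {a p : Fin 3 → S} (h : IsWeaklyRegular S [a 0, a 1])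
    (hp : a ⨯₃ p = 0) : ∃ c : S, p = c • a := by
  have hp₁ : a 2 * p 0 - a 0 * p 2 = 0 := by simpa [cross_apply] using congrFun hp 1
  have hp₂ : a 0 * p 1 - a 1 * p 0 = 0 := by simpa [cross_apply] using congrFun hp 2
  obtain ⟨c, hc₁, hc₀⟩ := exists_of_mul_add_mul_eq_zero h
    (show a 0 * p 1 + a 1 * -p 0 = 0 by linear_combination hp₂)
  have h₀ : p 0 = c * a 0 := by linear_combination -hc₀
  have h₂ : p 2 = c * a 2 := sub_eq_zero.1 ((isWeaklyRegular_pair_iff.1 h).1 _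
    (by linear_combination a 2 * h₀ - hp₁))
  refine ⟨c, funext fun i ↦ ?_⟩
  fin_cases i
  exacts [h₀, hc₁, h₂]

theorem cross_smul_eq_add (r s p : Fin 3 → S) (i : Fin 3) :
    (r ⨯₃ s) i • p =
      (p ⨯₃ s) i • r + (r ⨯₃ p) i • s + Pi.single i (p ⬝ᵥ r ⨯₃ s) := by
  ext j
  fin_cases i <;> fin_cases j <;> simp [cross_apply, dotProduct, Fin.sum_univ_three] <;> ring

/-- Exactness in the middle of the Hilbert–Burch complex of a `2 × 3` matrix. -/
theorem exists_eq_add_of_mul_cross_add_eq_zero {r s : Fin 3 → S} {p₀ p₁ p₂ : S}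
    (h : IsWeaklyRegular S [(r ⨯₃ s) 0, (r ⨯₃ s) 1])
    (hp : p₀ * (r ⨯₃ s) 0 + p₁ * (r ⨯₃ s) 1 + p₂ * (r ⨯₃ s) 2 = 0) :
    ∃ c d, p₀ = c * r 0 + d * s 0 ∧ p₁ = c * r 1 + d * s 1 ∧ p₂ = c * r 2 + d * s 2 := by
  set p : Fin 3 → S := ![p₀, p₁, p₂]
  replace hp : p ⬝ᵥ r ⨯₃ s = 0 := (vec3_dotProduct _ _).trans hp
  obtain ⟨c, hc⟩ := exists_eq_smul_of_cross_eq_zero (p := p ⨯₃ s) h (by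
    rw [cross_cross_eq_smul_sub_smul', dotProduct_comm, dot_cross_self, hp, zero_smul, zero_smul,
      sub_zero])
  obtain ⟨d, hd⟩ := exists_eq_smul_of_cross_eq_zero (p := p ⨯₃ r) h (by
    rw [cross_cross_eq_smul_sub_smul', dotProduct_comm, dot_self_cross, hp, zero_smul, zero_smul,
      sub_zero])
  have key (j) : p j = c * r j + -d * s j := by
    refine sub_eq_zero.1 ((isWeaklyRegular_pair_iff.1 h).1 _ ?_)
    have := congrFun (cross_smul_eq_add r s p 0) j
    rw [hp, hc, ← cross_anticomm p r, hd, Pi.single_zero, add_zero] at this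
    simp only [Pi.smul_apply, Pi.add_apply, Pi.neg_apply, smul_eq_mul] at this
    linear_combination this
  exact ⟨c, -d, key 0, key 1, key 2⟩

/-- The quadratic monomials in `m 0, m 1, m 2`, generating the square of the ideal `(m)`. -/
def quadraticMonomials (m : Fin 3 → S) : Fin 6 → S :=
  ![m 0 ^ 2, m 0 * m 1, m 0 * m 2, m 1 ^ 2, m 1 * m 2, m 2 ^ 2]

/-- The product `S³ × S³ → Sym² S³`, in the basis dual to `quadraticMonomials`. -/
def symProd : (Fin 3 → S) →ₗ[S] (Fin 3 → S) →ₗ[S] Fin 6 → S :=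
  LinearMap.mk₂ S (fun p q ↦ ![p 0 * q 0, p 0 * q 1 + p 1 * q 0, p 0 * q 2 + p 2 * q 0,
      p 1 * q 1, p 1 * q 2 + p 2 * q 1, p 2 * q 2])
    (fun p p' q ↦ by ext i; fin_cases i <;> simp <;> ring)
    (fun c p q ↦ by ext i; fin_cases i <;> simp <;> ring)
    (fun p q q' ↦ by ext i; fin_cases i <;> simp <;> ring)
    (fun c p q ↦ by ext i; fin_cases i <;> simp <;> ring)

theorem symProd_apply (p q : Fin 3 → S) :
    symProd p q = ![p 0 * q 0, p 0 * q 1 + p 1 * q 0, p 0 * q 2 + p 2 * q 0,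
      p 1 * q 1, p 1 * q 2 + p 2 * q 1, p 2 * q 2] :=
  rfl

theorem symProd_comm (p q : Fin 3 → S) : symProd p q = symProd q p := by
  ext i
  fin_cases i <;> simp [symProd_apply] <;> ring

theorem quadraticMonomials_dotProduct (m : Fin 3 → S) (q : Fin 6 → S) :
    quadraticMonomials m ⬝ᵥ q = m 0 ^ 2 * q 0 + m 0 * m 1 * q 1 + m 0 * m 2 * q 2 +
      m 1 ^ 2 * q 3 + m 1 * m 2 * q 4 + m 2 ^ 2 * q 5 := by
  simp [quadraticMonomials, dotProduct, Fin.sum_univ_six]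

theorem quadraticMonomials_dotProduct_symProd (m p q : Fin 3 → S) :
    quadraticMonomials m ⬝ᵥ symProd p q = (m ⬝ᵥ p) * (m ⬝ᵥ q) := by
  rw [quadraticMonomials_dotProduct, vec3_dotProduct, vec3_dotProduct]
  change m 0 ^ 2 * (p 0 * q 0) + m 0 * m 1 * (p 0 * q 1 + p 1 * q 0) +
      m 0 * m 2 * (p 0 * q 2 + p 2 * q 0) + m 1 ^ 2 * (p 1 * q 1) +
      m 1 * m 2 * (p 1 * q 2 + p 2 * q 1) + m 2 ^ 2 * (p 2 * q 2) = _
  ring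

theorem span_range_quadraticMonomials (m : Fin 3 → S) :
    Ideal.span (Set.range (quadraticMonomials m)) = Ideal.span (Set.range m) ^ 2 := by
  have hm (i) : m i ∈ Ideal.span (Set.range m) := Ideal.subset_span ⟨i, rfl⟩
  apply le_antisymm
  · rw [Ideal.span_le, sq]
    rintro _ ⟨i, rfl⟩
    fin_cases i <;> simp [quadraticMonomials, sq, Ideal.mul_mem_mul, hm]
  · rw [sq, Ideal.span_mul_span', Ideal.span_le]
    rintro _ ⟨_, ⟨i, rfl⟩, _, ⟨j, rfl⟩, rfl⟩
    refine (Ideal.mem_span_range_iff_exists_fun).2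
      ⟨symProd (Pi.single i 1) (Pi.single j 1), (dotProduct_comm _ _).trans ?_⟩
    simp [quadraticMonomials_dotProduct_symProd]

/-- The relations among the quadratic monomials in `r ⨯₃ s` coming from the linear forms
`r` and `s`. -/
def symSquareRelations (r s : Fin 3 → S) : (Fin 3 → S) × (Fin 3 → S) →ₗ[S] Fin 6 → S :=
  (symProd r).coprod (symProd s)

/-- The relation between `r` and `s` in the symmetric square. -/
def symSquareSyzygy (r s : Fin 3 → S) : S →ₗ[S] (Fin 3 → S) × (Fin 3 → S) :=
  LinearMap.toSpanSingleton S _ (s, -r)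

variable {r s : Fin 3 → S}

theorem quadraticMonomials_cross_dotProduct_symSquareRelations
    (x : (Fin 3 → S) × (Fin 3 → S)) :
    quadraticMonomials (r ⨯₃ s) ⬝ᵥ symSquareRelations r s x = 0 := by
  rw [symSquareRelations, LinearMap.coprod_apply, dotProduct_add,
    quadraticMonomials_dotProduct_symProd, quadraticMonomials_dotProduct_symProd,
    dotProduct_comm, dot_self_cross, dotProduct_comm _ s, dot_cross_self, zero_mul, zero_mul,
    add_zero]

theorem symSquareRelations_symSquareSyzygy (c : S) :
    symSquareRelations r s (symSquareSyzygy r s c) = 0 := by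
  rw [symSquareSyzygy, LinearMap.toSpanSingleton_apply, map_smul, symSquareRelations,
    LinearMap.coprod_apply, map_neg, symProd_comm, add_neg_cancel, smul_zero]

theorem symSquareSyzygy_injective (h : IsWeaklyRegular S [r 2, s 2]) :
    Function.Injective (symSquareSyzygy r s) := by
  refine (injective_iff_map_eq_zero _).2 fun c hc ↦ (isWeaklyRegular_pair_iff.1 h).1 c ?_
  simpa [symSquareSyzygy, mul_comm] using congrArg (fun x ↦ x.2 2) hc

theorem exists_of_symSquareRelations_eq_zero (hm : IsWeaklyRegular S [(r ⨯₃ s) 0, (r ⨯₃ s) 1])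
    (h : IsWeaklyRegular S [r 2, s 2]) {x : (Fin 3 → S) × (Fin 3 → S)}
    (hx : symSquareRelations r s x = 0) : ∃ c, symSquareSyzygy r s c = x := by
  obtain ⟨a, b⟩ := x
  have h₁ : r 0 * a 1 + r 1 * a 0 + (s 0 * b 1 + s 1 * b 0) = 0 := congrFun hx 1
  have h₂ : r 0 * a 2 + r 2 * a 0 + (s 0 * b 2 + s 2 * b 0) = 0 := congrFun hx 2
  have h₃ : r 1 * a 1 + s 1 * b 1 = 0 := congrFun hx 3
  have h₄ : r 1 * a 2 + r 2 * a 1 + (s 1 * b 2 + s 2 * b 1) = 0 := congrFun hx 4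
  have h₅ : r 2 * a 2 + s 2 * b 2 = 0 := congrFun hx 5
  have hm₀ : ∀ q, (r 1 * s 2 - r 2 * s 1) * q = 0 → q = 0 := (isWeaklyRegular_pair_iff.1 hm).1
  obtain ⟨c, ha₂, hb₂⟩ := exists_of_mul_add_mul_eq_zero h h₅
  obtain ⟨d, ha₁, hb₁⟩ := exists_of_mul_add_mul_eq_zero h
    (show r 2 * (a 1 - c * s 1) + s 2 * (b 1 + c * r 1) = 0 by
      linear_combination h₄ - r 1 * ha₂ - s 1 * hb₂)
  obtain ⟨d', ha₀, hb₀⟩ := exists_of_mul_add_mul_eq_zero h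
    (show r 2 * (a 0 - c * s 0) + s 2 * (b 0 + c * r 0) = 0 by
      linear_combination h₂ - r 0 * ha₂ - s 0 * hb₂)
  obtain rfl : d = 0 := hm₀ _ (by linear_combination h₃ - r 1 * ha₁ - s 1 * hb₁)
  obtain rfl : d' = 0 := hm₀ _ (by
    linear_combination h₁ - r 1 * ha₀ - s 1 * hb₀ - r 0 * ha₁ - s 0 * hb₁)
  refine ⟨c, Prod.ext (funext fun i ↦ ?_) (funext fun i ↦ ?_)⟩ <;> fin_cases i
  exacts [show c * s 0 = a 0 by linear_combination -ha₀,
    show c * s 1 = a 1 by linear_combination -ha₁, ha₂.symm,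
    show c * -r 0 = b 0 by linear_combination -hb₀,
    show c * -r 1 = b 1 by linear_combination -hb₁,
    show c * -r 2 = b 2 by linear_combination -hb₂]

theorem exists_of_quadraticMonomials_dotProduct_eq_zero_of_apply_five_eq_zero
    (hm : IsWeaklyRegular S [(r ⨯₃ s) 0, (r ⨯₃ s) 1]) (h : IsWeaklyRegular S [r 2, s 2])
    {q : Fin 6 → S} (hq : quadraticMonomials (r ⨯₃ s) ⬝ᵥ q = 0) (hq₅ : q 5 = 0) :
    ∃ x, symSquareRelations r s x = q := by
  have hm₀ : (r ⨯₃ s) 0 = r 1 * s 2 - r 2 * s 1 := rfl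
  have hm₁ : (r ⨯₃ s) 1 = r 2 * s 0 - r 0 * s 2 := rfl
  rw [quadraticMonomials_dotProduct, hq₅] at hq
  obtain ⟨α, β, h₀, h₁, h₂⟩ := exists_eq_add_of_mul_cross_add_eq_zero hm
    (p₀ := q 0 * (r ⨯₃ s) 0 + q 1 * (r ⨯₃ s) 1 + q 2 * (r ⨯₃ s) 2)
    (p₁ := q 3 * (r ⨯₃ s) 1 + q 4 * (r ⨯₃ s) 2) (p₂ := 0) (by linear_combination hq)
  obtain ⟨γ, rfl, rfl⟩ := exists_of_mul_add_mul_eq_zero h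
    (show r 2 * α + s 2 * β = 0 by linear_combination -h₂)
  obtain ⟨c, d, hc₀, hc₁, hc₂⟩ := exists_eq_add_of_mul_cross_add_eq_zero hm
    (p₀ := -γ) (p₁ := q 3) (p₂ := q 4) (by linear_combination h₁ - γ * hm₀)
  obtain ⟨c', d', hc'₀, hc'₁, hc'₂⟩ := exists_eq_add_of_mul_cross_add_eq_zero hm
    (p₀ := q 0) (p₁ := q 1 + γ) (p₂ := q 2) (by linear_combination h₀ + γ * hm₁)
  refine ⟨(![c', c, 0], ![d', d, 0]), funext fun i ↦ ?_⟩
  fin_cases i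
  exacts [show r 0 * c' + s 0 * d' = q 0 by linear_combination -hc'₀,
    show r 0 * c + r 1 * c' + (s 0 * d + s 1 * d') = q 1 by linear_combination -hc'₁ - hc₀,
    show r 0 * 0 + r 2 * c' + (s 0 * 0 + s 2 * d') = q 2 by linear_combination -hc'₂,
    show r 1 * c + s 1 * d = q 3 by linear_combination -hc₁,
    show r 1 * 0 + r 2 * c + (s 1 * 0 + s 2 * d) = q 4 by linear_combination -hc₂,
    show r 2 * 0 + s 2 * 0 = q 5 by linear_combination -hq₅]

theorem exists_of_quadraticMonomials_dotProduct_eq_zero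
    (hm : IsWeaklyRegular S [(r ⨯₃ s) 0, (r ⨯₃ s) 1])
    (h : IsWeaklyRegular S [r 2, s 2, (r ⨯₃ s) 2]) {q : Fin 6 → S}
    (hq : quadraticMonomials (r ⨯₃ s) ⬝ᵥ q = 0) : ∃ x, symSquareRelations r s x = q := by
  obtain ⟨h, hm₂⟩ := isWeaklyRegular_triple_iff.1 h
  have hq' := hq
  rw [quadraticMonomials_dotProduct] at hq'
  obtain ⟨α, β, -, -, hαβ⟩ := exists_eq_add_of_mul_cross_add_eq_zero hm
    (p₀ := (r ⨯₃ s) 0 * q 0 + (r ⨯₃ s) 1 * q 1 + (r ⨯₃ s) 2 * q 2)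
    (p₁ := (r ⨯₃ s) 1 * q 3 + (r ⨯₃ s) 2 * q 4) (p₂ := (r ⨯₃ s) 2 * q 5)
    (by linear_combination hq')
  obtain ⟨a, b, hab⟩ := Ideal.mem_span_pair.1
    (hm₂ (q 5) (Ideal.mem_span_pair.2 ⟨α, β, hαβ.symm⟩))
  let x : (Fin 3 → S) × (Fin 3 → S) := (![0, 0, a], ![0, 0, b])
  obtain ⟨y, hy⟩ := exists_of_quadraticMonomials_dotProduct_eq_zero_of_apply_five_eq_zero
    (q := q - symSquareRelations r s x) hm h
    (by rw [dotProduct_sub, hq, quadraticMonomials_cross_dotProduct_symSquareRelations, sub_zero])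
    (show q 5 - (r 2 * a + s 2 * b) = 0 by linear_combination -hab)
  exact ⟨y + x, by rw [map_add, hy, sub_add_cancel]⟩

/-- The matrix whose columns are the products of `t i` with `(0, m 2, m 1)`, `(m 2, 0, m 0)` and
`(m 1, m 0, 0)`. It gives degree `2` of `koszulToSymSquare`. -/
def crossMatrix (m t : Fin 3 → S) : Matrix (Fin 3) (Fin 3) S :=
  !![0, t 1 * m 2, t 2 * m 1; t 0 * m 2, 0, t 2 * m 0; t 0 * m 1, t 1 * m 0, 0]

theorem crossMatrix_mulVec (m t x : Fin 3 → S) :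
    crossMatrix m t *ᵥ x = ![t 1 * m 2 * x 1 + t 2 * m 1 * x 2,
      t 0 * m 2 * x 0 + t 2 * m 0 * x 2, t 0 * m 1 * x 0 + t 1 * m 0 * x 1] := by
  funext i
  fin_cases i <;> simp [crossMatrix, mulVec, dotProduct, Fin.sum_univ_three]

theorem crossMatrix_mulVec_sq {m t : Fin 3 → S} (h : t ⬝ᵥ m = 0) :
    crossMatrix m t *ᵥ (m ^ 2) = -(m 0 * m 1 * m 2) • t := by
  rw [vec3_dotProduct] at h
  rw [crossMatrix_mulVec]
  funext i
  fin_cases i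
  exacts [
    show t 1 * m 2 * m 1 ^ 2 + t 2 * m 1 * m 2 ^ 2 = -(m 0 * m 1 * m 2) * t 0 by
      linear_combination m 1 * m 2 * h,
    show t 0 * m 2 * m 0 ^ 2 + t 2 * m 0 * m 2 ^ 2 = -(m 0 * m 1 * m 2) * t 1 by
      linear_combination m 0 * m 2 * h,
    show t 0 * m 1 * m 0 ^ 2 + t 1 * m 0 * m 1 ^ 2 = -(m 0 * m 1 * m 2) * t 2 by
      linear_combination m 0 * m 1 * h]

/-- The inclusion of the coordinates of `quadraticMonomials` corresponding to squares. -/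
def diagonal : (Fin 3 → S) →ₗ[S] Fin 6 → S :=
  LinearMap.pi ![LinearMap.proj 0, 0, 0, LinearMap.proj 1, 0, LinearMap.proj 2]

theorem diagonal_apply (x : Fin 3 → S) : diagonal x = ![x 0, 0, 0, x 1, 0, x 2] := by
  funext i
  fin_cases i <;> rfl

theorem quadraticMonomials_dotProduct_diagonal (m x : Fin 3 → S) :
    quadraticMonomials m ⬝ᵥ diagonal x = (m ^ 2) ⬝ᵥ x := by
  rw [quadraticMonomials_dotProduct, vec3_dotProduct, diagonal_apply]
  simp

theorem symSquareRelations_crossMatrix (r s x : Fin 3 → S) :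
    symSquareRelations r s (-(crossMatrix (r ⨯₃ s) s *ᵥ x), crossMatrix (r ⨯₃ s) r *ᵥ x) =
      diagonal (((r ⨯₃ s) ^ 2) ⨯₃ x) := by
  have h₀ : (r ⨯₃ s) 0 = r 1 * s 2 - r 2 * s 1 := rfl
  have h₁ : (r ⨯₃ s) 1 = r 2 * s 0 - r 0 * s 2 := rfl
  have h₂ : (r ⨯₃ s) 2 = r 0 * s 1 - r 1 * s 0 := rfl
  generalize r ⨯₃ s = m at *
  funext i
  fin_cases i <;>
    simp [symSquareRelations, symProd_apply, crossMatrix_mulVec, diagonal_apply, cross_apply,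
      h₀, h₁, h₂] <;> ring

end

section

variable {S : Type u} [CommRing S] {r s : Fin 3 → S}

theorem exact_ofHom {A B D : Type u} [AddCommGroup A] [AddCommGroup B] [AddCommGroup D]
    [Module S A] [Module S B] [Module S D] {f : A →ₗ[S] B} {g : B →ₗ[S] D}
    {w : ModuleCat.ofHom f ≫ ModuleCat.ofHom g = 0} (h : ∀ x, g x = 0 → ∃ y, f y = x) :
    (ShortComplex.mk _ _ w).Exact :=
  (ShortComplex.moduleCat_exact_iff _).2 h

theorem ofHom_dotProductBilin_comp_quotientMk {ι : Type} [Fintype ι] (a : ι → S) {J : Ideal S}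
    (h : Set.range a ⊆ J) :
    ModuleCat.ofHom (dotProductBilin S S a) ≫ ModuleCat.ofHom (Submodule.mkQ J) = 0 := by
  ext x
  exact (Submodule.Quotient.mk_eq_zero J).2 (J.sum_mem fun i _ ↦ J.mul_mem_right _ (h ⟨i, rfl⟩))

theorem ofHom_comp_ofHom_eq_zero {A B D : Type u} [AddCommGroup A] [AddCommGroup B]
    [AddCommGroup D] [Module S A] [Module S B] [Module S D] {f : A →ₗ[S] B} {g : B →ₗ[S] D}
    (h : ∀ x, g (f x) = 0) : ModuleCat.ofHom f ≫ ModuleCat.ofHom g = 0 := by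
  ext x
  exact h x

/-- The Koszul complex of three elements. -/
noncomputable abbrev koszul (a : Fin 3 → S) : ChainComplex (ModuleCat.{u} S) ℕ :=
  lengthThree (ModuleCat.ofHom (dotProductBilin S S a)) (ModuleCat.ofHom (crossProduct a))
    (ModuleCat.ofHom (LinearMap.toSpanSingleton S _ a))
    (ofHom_comp_ofHom_eq_zero fun x ↦ dot_self_cross a x)
    (ofHom_comp_ofHom_eq_zero fun x ↦ by simp)

/-- The map of Koszul complexes which is the identity in degree `0` and multiplication by `b i` on
the `i`-th generator in degree `1`. -/
noncomputable def koszulMap (a b : Fin 3 → S) : koszul (a * b) ⟶ koszul a :=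
  lengthThreeMap _ _ _ (𝟙 _)
    (ModuleCat.ofHom (LinearMap.mulLeft S b))
    (ModuleCat.ofHom (LinearMap.mulLeft S ![b 1 * b 2, b 0 * b 2, b 0 * b 1]))
    (ModuleCat.ofHom (LinearMap.mulLeft S (b 0 * b 1 * b 2)))
    (by
      refine ModuleCat.hom_ext (LinearMap.ext fun x ↦ ?_)
      change a ⬝ᵥ (b * x) = (a * b) ⬝ᵥ x
      simp only [dotProduct, Pi.mul_apply, mul_assoc])
    (by
      refine ModuleCat.hom_ext (LinearMap.ext fun x ↦ funext fun i ↦ ?_)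
      change (a ⨯₃ (![b 1 * b 2, b 0 * b 2, b 0 * b 1] * x)) i = (b * ((a * b) ⨯₃ x)) i
      fin_cases i <;> simp [cross_apply] <;> ring)
    (by
      refine ModuleCat.hom_ext (LinearMap.ext fun x ↦ funext fun i ↦ ?_)
      change (b 0 * b 1 * b 2 * x) * a i =
        ![b 1 * b 2, b 0 * b 2, b 0 * b 1] i * (x * (a i * b i))
      fin_cases i <;> simp <;> ring)

/-- The complex resolving the quotient by the square of the ideal generated by the entries of
`r ⨯₃ s`. -/
noncomputable abbrev symSquareComplex (r s : Fin 3 → S) : ChainComplex (ModuleCat.{u} S) ℕ :=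
  lengthThree (ModuleCat.ofHom (dotProductBilin S S (quadraticMonomials (r ⨯₃ s))))
    (ModuleCat.ofHom (symSquareRelations r s)) (ModuleCat.ofHom (symSquareSyzygy r s))
    (ofHom_comp_ofHom_eq_zero quadraticMonomials_cross_dotProduct_symSquareRelations)
    (ofHom_comp_ofHom_eq_zero symSquareRelations_symSquareSyzygy)

/-- The resolution of the quotient by the square of the ideal of maximal minors of a sufficiently
regular `2 × 3` matrix. -/
noncomputable def symSquareResolution (hm : IsWeaklyRegular S [(r ⨯₃ s) 0, (r ⨯₃ s) 1])
    (h : IsWeaklyRegular S [r 2, s 2, (r ⨯₃ s) 2]) :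
    ProjectiveResolution (ModuleCat.of S (S ⧸ Ideal.span (Set.range (r ⨯₃ s)) ^ 2)) :=
  have : Mono (ModuleCat.ofHom (symSquareSyzygy r s)) :=
    (ModuleCat.mono_iff_injective _).2
      (symSquareSyzygy_injective (isWeaklyRegular_triple_iff.1 h).1)
  have : Epi (ModuleCat.ofHom (Submodule.mkQ (Ideal.span (Set.range (r ⨯₃ s)) ^ 2))) :=
    (ModuleCat.epi_iff_surjective _).2 (Submodule.mkQ_surjective _)
  lengthThreeResolution (ModuleCat.ofHom (dotProductBilin S S (quadraticMonomials (r ⨯₃ s))))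
    (ModuleCat.ofHom (symSquareRelations r s)) (ModuleCat.ofHom (symSquareSyzygy r s))
    (ofHom_comp_ofHom_eq_zero quadraticMonomials_cross_dotProduct_symSquareRelations)
    (ofHom_comp_ofHom_eq_zero symSquareRelations_symSquareSyzygy)
    (ModuleCat.ofHom (Submodule.mkQ _))
    (ofHom_dotProductBilin_comp_quotientMk _ (by
      rw [← span_range_quadraticMonomials]
      exact Ideal.subset_span))
    (exact_ofHom fun x hx ↦ by
      rw [Submodule.mkQ_apply, Submodule.Quotient.mk_eq_zero, ← span_range_quadraticMonomials] at hx
      obtain ⟨c, hc⟩ := Ideal.mem_span_range_iff_exists_fun.1 hx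
      exact ⟨c, (dotProduct_comm _ _).trans hc⟩)
    (exact_ofHom fun x hx ↦ exists_of_quadraticMonomials_dotProduct_eq_zero hm h hx)
    (exact_ofHom fun x hx ↦ exists_of_symSquareRelations_eq_zero hm
      (isWeaklyRegular_triple_iff.1 h).1 hx)

/-- The comparison map of resolutions over the identity in degree `0`, which expresses that each
`(r ⨯₃ s) i ^ 2` is one of the quadratic monomials in `r ⨯₃ s`. -/
noncomputable def koszulToSymSquare (r s : Fin 3 → S) :
    koszul ((r ⨯₃ s) ^ 2) ⟶ symSquareComplex r s :=
  lengthThreeMap _ _ _ (𝟙 _) (ModuleCat.ofHom diagonal)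
    (ModuleCat.ofHom ((-(crossMatrix (r ⨯₃ s) s).mulVecLin).prod
      (crossMatrix (r ⨯₃ s) r).mulVecLin))
    (ModuleCat.ofHom (LinearMap.mulLeft S ((r ⨯₃ s) 0 * (r ⨯₃ s) 1 * (r ⨯₃ s) 2)))
    (ModuleCat.hom_ext (LinearMap.ext fun x ↦ quadraticMonomials_dotProduct_diagonal _ x))
    (ModuleCat.hom_ext (LinearMap.ext fun x ↦ symSquareRelations_crossMatrix r s x))
    (by
      have hr := crossMatrix_mulVec_sq (dot_self_cross r s)
      have hs := crossMatrix_mulVec_sq (dot_cross_self r s)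
      refine ModuleCat.hom_ext (LinearMap.ext_ring (Prod.ext ?_ ?_))
      · change (_ * (1 : S)) • s = -(crossMatrix _ s *ᵥ ((1 : S) • _))
        rw [one_smul, hs, mul_one, neg_smul, neg_neg]
      · change (_ * (1 : S)) • -r = crossMatrix _ r *ᵥ ((1 : S) • _)
        rw [one_smul, hr, mul_one, neg_smul, smul_neg])

end

end SymmetricSquare

section Nonvanishing

open Matrix RingTheory.Sequence

variable {S : Type u} [CommRing S] {r s : Fin 3 → S}

theorem koszulMap_comp_koszulToSymSquare_f_three_apply (b : Fin 3 → S) (c : S) :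
    ((koszulMap ((r ⨯₃ s) ^ 2) b ≫ koszulToSymSquare r s).f 3).hom c =
      (r ⨯₃ s) 0 * (r ⨯₃ s) 1 * (r ⨯₃ s) 2 * (b 0 * b 1 * b 2 * c) :=
  rfl

theorem koszul_d_three_two_comp_apply_mem (a : Fin 3 → S)
    (y : (koszul a).X 2 ⟶ ModuleCat.of S S) (c : S) :
    ((koszul a).d 3 2 ≫ y).hom c ∈ Ideal.span (Set.range a) := by
  have hd : (koszul a).d 3 2 = ModuleCat.ofHom (LinearMap.toSpanSingleton S _ a) :=
    lengthThree_d ..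
  have hy : y.hom (c • a) ∈ Ideal.span (Set.range a) := by
    let g : (Fin 3 → S) →ₗ[S] S := y.hom
    change g (c • a) ∈ _
    rw [LinearMap.pi_apply_eq_sum_univ g]
    refine Ideal.sum_mem _ fun i _ ↦ Ideal.mul_mem_right _ _ (Ideal.mul_mem_left _ _ ?_)
    exact Ideal.subset_span ⟨i, rfl⟩
  rw [hd]
  exact hy

theorem nontrivial_localCohomology_three_of_pow_notMem
    (hm : IsWeaklyRegular S [(r ⨯₃ s) 0, (r ⨯₃ s) 1])
    (h : IsWeaklyRegular S [r 2, s 2, (r ⨯₃ s) 2])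
    (hpow : ∀ n, ((r ⨯₃ s) 0 * (r ⨯₃ s) 1 * (r ⨯₃ s) 2) ^ n ∉
      Ideal.span (Set.range ((r ⨯₃ s) ^ (n + 1)))) :
    Nontrivial ((localCohomology (Ideal.span (Set.range (r ⨯₃ s))) 3).obj (ModuleCat.of S S)) := by
  by_contra hsub
  set m := r ⨯₃ s
  set I := Ideal.span (Set.range m)
  let P := symSquareResolution hm h
  let z : P.complex.X 3 ⟶ ModuleCat.of S S := 𝟙 (ModuleCat.of S S)
  have hz : P.complex.d 4 3 ≫ z = 0 := (isZero_zero _).eq_of_src _ _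
  obtain ⟨t, ht, hclass⟩ := exists_ext_map_eq_zero_of_subsingleton I 3 _
    (not_nontrivial_iff_subsingleton.1 hsub) 2 (extClass S P z hz)
  obtain ⟨n, rfl⟩ := Nat.exists_eq_add_of_le ht
  have hε : Set.range (m ^ 2 * m ^ n) ⊆ (I ^ (2 + n) : Ideal S) := by
    rintro _ ⟨i, rfl⟩
    rw [← pow_add]
    exact Ideal.pow_mem_pow (Ideal.subset_span (Set.mem_range_self i)) _
  have hd : (koszul (m ^ 2 * m ^ n)).d 1 0 ≫ ModuleCat.ofHom (Submodule.mkQ (I ^ (2 + n))) = 0 := by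
    rw [lengthThree_d]
    exact ofHom_dotProductBilin_comp_quotientMk _ hε
  have hψ : (koszulMap (m ^ 2) (m ^ n) ≫ koszulToSymSquare r s).f 0 ≫ P.π.f 0 =
      ModuleCat.ofHom (Submodule.mkQ (I ^ (2 + n))) ≫ quotientMap (Ideal.pow_le_pow_right ht) := by
    have hπ : P.π.f 0 = ModuleCat.ofHom (Submodule.mkQ (I ^ 2)) :=
      ChainComplex.toSingle₀Equiv_symm_apply_f_zero _ _
    rw [hπ]
    rfl
  obtain ⟨y, hy⟩ := exists_comp_eq_d_comp_of_ext_map_extClass_eq_zero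
    (quotientMap (Ideal.pow_le_pow_right ht)) P (K := koszul (m ^ 2 * m ^ n))
    (ModuleCat.ofHom (Submodule.mkQ (I ^ (2 + n)))) hd
    (koszulMap (m ^ 2) (m ^ n) ≫ koszulToSymSquare r s) hψ z hz hclass
  have hmem := koszul_d_three_two_comp_apply_mem (m ^ 2 * m ^ n) y 1
  rw [← hy] at hmem
  change ((koszulMap (m ^ 2) (m ^ n) ≫ koszulToSymSquare r s).f 3).hom (1 : S) ∈ _ at hmem
  rw [koszulMap_comp_koszulToSymSquare_f_three_apply, mul_one, Pi.pow_apply, Pi.pow_apply,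
    Pi.pow_apply, ← mul_pow, ← mul_pow, ← pow_succ', ← pow_add, Nat.add_comm 2] at hmem
  exact hpow (n + 1) hmem

end Nonvanishing

section TwoGenerators

open Matrix RingTheory.Sequence

variable {S : Type u} [CommRing S] {f g : S}

/-- The Koszul resolution of a regular sequence of length two. -/
noncomputable def koszulResolutionPair (h : IsWeaklyRegular S [f, g]) :
    ProjectiveResolution (ModuleCat.of S (S ⧸ Ideal.span {f, g})) :=
  have hrange : Set.range ![f, g] = {f, g} := by simp [Set.pair_comm]
  have : Mono (ModuleCat.ofHom (0 : PUnit.{u + 1} →ₗ[S] S)) :=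
    (ModuleCat.mono_iff_injective _).2 (Function.injective_of_subsingleton _)
  have : Epi (ModuleCat.ofHom (Submodule.mkQ (Ideal.span {f, g}))) :=
    (ModuleCat.epi_iff_surjective _).2 (Submodule.mkQ_surjective _)
  lengthThreeResolution (ModuleCat.ofHom (dotProductBilin S S ![f, g]))
    (ModuleCat.ofHom (LinearMap.toSpanSingleton S (Fin 2 → S) ![g, -f]))
    (ModuleCat.ofHom (0 : PUnit.{u + 1} →ₗ[S] S))
    (ofHom_comp_ofHom_eq_zero fun c ↦ by simp [mul_comm, mul_left_comm])
    (ofHom_comp_ofHom_eq_zero fun _ ↦ by simp)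
    (ModuleCat.ofHom (Submodule.mkQ _))
    (ofHom_dotProductBilin_comp_quotientMk _ (hrange ▸ Ideal.subset_span))
    (exact_ofHom fun x hx ↦ by
      rw [Submodule.mkQ_apply, Submodule.Quotient.mk_eq_zero, ← hrange] at hx
      obtain ⟨c, hc⟩ := Ideal.mem_span_range_iff_exists_fun.1 hx
      exact ⟨c, (dotProduct_comm _ _).trans hc⟩)
    (exact_ofHom fun x hx ↦ by
      obtain ⟨c, h₀, h₁⟩ := exists_of_mul_add_mul_eq_zero h (p := x 0) (q := x 1)
        (by simpa [dotProduct, Fin.sum_univ_two] using hx)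
      exact ⟨c, by ext i; fin_cases i <;> simp [h₀, h₁]⟩)
    (exact_ofHom fun c hc ↦ by
      have : c * -f = 0 := congrFun hc 1
      exact ⟨0, ((isWeaklyRegular_pair_iff.1 h).1 c (by linear_combination -this)).symm⟩)

theorem subsingleton_localCohomology_span_pair (h : ∀ n, IsWeaklyRegular S [f ^ n, g ^ n]) (n : ℕ)
    (M : ModuleCat.{u} S) : Subsingleton ((localCohomology (Ideal.span {f, g}) (n + 3)).obj M) := by
  refine subsingleton_localCohomology_of_isZero_ext _ _ _ fun t ↦
    ⟨t + t, Nat.le_add_left t t, Ideal.span {f ^ t, g ^ t}, ?_, ?_, ?_⟩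
  · simp only [Ideal.span_insert, ← Ideal.span_singleton_pow]
    exact Ideal.sup_pow_add_le_pow_sup_pow
  · rw [Ideal.span_le]
    rintro _ (rfl | rfl) <;> exact Ideal.pow_mem_pow (Ideal.subset_span (by simp)) _
  · refine isZero_ext_of_isZero_X (koszulResolutionPair (h t)) ?_
    match n with
    | 0 => exact ModuleCat.isZero_of_subsingleton (ModuleCat.of S PUnit)
    | _ + 1 => exact isZero_zero _

theorem isRelPrime_of_mem_radical_span_pair [DecompositionMonoid S] {a b : S} (hab : IsRelPrime a b)
    (ha : a ∈ (Ideal.span {f, g}).radical) (hb : b ∈ (Ideal.span {f, g}).radical) :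
    IsRelPrime f g := by
  intro d hf hg
  have hd : Ideal.span {f, g} ≤ Ideal.span {d} := by
    simp [Ideal.span_le, Set.insert_subset_iff, Ideal.mem_span_singleton, hf, hg]
  obtain ⟨i, hi⟩ := ha
  obtain ⟨j, hj⟩ := hb
  exact hab.pow (Ideal.mem_span_singleton.1 (hd hi)) (Ideal.mem_span_singleton.1 (hd hj))

variable [IsDomain S] [DecompositionMonoid S]

theorem isWeaklyRegular_pair_of_isRelPrime (hf : f ≠ 0) (h : IsRelPrime f g) :
    IsWeaklyRegular S [f, g] :=
  isWeaklyRegular_pair_iff.2 ⟨fun _ hq ↦ (mul_eq_zero.1 hq).resolve_left hf,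
    fun _ ↦ h.dvd_of_dvd_mul_left⟩

theorem subsingleton_localCohomology_of_radical_eq [IsNoetherianRing S] {I : Ideal S} {a b : S}
    (ha : a ∈ I) (hb : b ∈ I) (hab : IsRelPrime a b) (h : (Ideal.span {f, g}).radical = I.radical)
    (n : ℕ) (M : ModuleCat.{u} S) : Subsingleton ((localCohomology I (n + 3)).obj M) := by
  have hfg : IsRelPrime f g := isRelPrime_of_mem_radical_span_pair hab
    (h ▸ Ideal.le_radical ha) (h ▸ Ideal.le_radical hb)
  wlog hf : f ≠ 0 generalizing f g
  · refine this (by rwa [Ideal.span_pair_comm]) hfg.symm fun hg ↦ ?_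
    rw [not_not.1 hf, hg, isRelPrime_self] at hfg
    exact not_isUnit_zero hfg
  have := subsingleton_localCohomology_span_pair
    (fun t ↦ isWeaklyRegular_pair_of_isRelPrime (pow_ne_zero t hf) hfg.pow) n M
  exact ((localCohomology.isoOfSameRadical h (n + 3)).app M).toLinearEquiv.symm.subsingleton

end TwoGenerators

section Apolar

variable {σ k : Type*} [CommSemiring k]

/-- The apolar pairing, in which distinct monomials are orthogonal and the monomial of exponent `α`
has square `∏ i, (α i)!`; multiplication by `X i` is then adjoint to `pderiv i`. -/
noncomputable def apolar : MvPolynomial σ k →ₗ[k] MvPolynomial σ k →ₗ[k] k :=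
  (basisMonomials σ k).constr k fun α ↦ (α.prod fun _ n ↦ (n.factorial : k)) • lcoeff k α

theorem apolar_monomial (α : σ →₀ ℕ) (c : k) (g : MvPolynomial σ k) :
    apolar (monomial α c) g = c * ((α.prod fun _ n ↦ (n.factorial : k)) * coeff α g) := by
  have : monomial α c = c • basisMonomials σ k α := by simp [smul_monomial]
  rw [this, map_smul, apolar, Module.Basis.constr_basis]
  rfl

theorem prod_factorial_add_single (α : σ →₀ ℕ) (i : σ) :
    ((α + Finsupp.single i 1).prod fun _ n ↦ (n.factorial : k)) =
      (α i + 1) * α.prod fun _ n ↦ (n.factorial : k) := by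
  have h (β : σ →₀ ℕ) := Finsupp.mul_prod_erase' β i (fun _ n ↦ (n.factorial : k)) (by simp)
  rw [← h, ← h α, Finsupp.erase_add, Finsupp.erase_single, add_zero]
  simp [Nat.factorial_succ, mul_assoc]

theorem apolar_X_mul (i : σ) (f g : MvPolynomial σ k) :
    apolar (X i * f) g = apolar f (pderiv i g) := by
  induction f using MvPolynomial.induction_on' with
  | monomial α c =>
    rw [X, monomial_mul, one_mul, add_comm, apolar_monomial, apolar_monomial, coeff_pderiv,
      prod_factorial_add_single]
    ring
  | add p q hp hq => simp only [mul_add, map_add, LinearMap.add_apply, hp, hq]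

theorem apolar_pow_mul {p : MvPolynomial σ k} {D : Module.End k (MvPolynomial σ k)}
    (h : ∀ f g, apolar (p * f) g = apolar f (D g)) (n : ℕ) (f g : MvPolynomial σ k) :
    apolar (p ^ n * f) g = apolar f ((D ^ n) g) := by
  induction n generalizing g with
  | zero => simp
  | succ n ih => rw [pow_succ', mul_assoc, h, ih, pow_succ, Module.End.mul_apply]

end Apolar

section PartialDerivatives

theorem derivation_aeval {k τ A M : Type*} [CommSemiring k] [Fintype τ] [CommSemiring A]
    [Algebra k A] [AddCommMonoid M] [Module k M] [Module A M] (D : Derivation k A M) (m : τ → A)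
    (p : MvPolynomial τ k) :
    D (aeval m p) = ∑ j, aeval m (pderiv j p) • D (m j) := by
  classical
  induction p using MvPolynomial.induction_on with
  | C a => simp
  | add p q hp hq => simp only [map_add, hp, hq, add_smul, Finset.sum_add_distrib]
  | mul_X p i hp =>
    simp only [map_mul, aeval_X, Derivation.leibniz, hp, smul_eq_mul, pderiv_X, map_add, add_smul,
      Finset.sum_add_distrib, Finset.smul_sum, mul_smul]
    congr 1
    simp [Pi.single_apply, apply_ite, ite_smul]

theorem pderiv_pderiv_comm {σ k : Type*} [CommRing k] (i j : σ) (p : MvPolynomial σ k) :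
    pderiv i (pderiv j p) = pderiv j (pderiv i p) := by
  classical
  have h : (⁅pderiv i, pderiv j⁆ : Derivation k (MvPolynomial σ k) (MvPolynomial σ k)) = 0 :=
    derivation_ext fun l ↦ (Derivation.commutator_apply ..).trans
      (by simp [pderiv_X, Pi.single_apply, apply_ite])
  exact sub_eq_zero.1 ((Derivation.commutator_apply ..).symm.trans (DFunLike.congr_fun h p))

theorem sum_X_mul_pderiv_monomial {σ k : Type*} [Fintype σ] [CommSemiring k] (s : σ →₀ ℕ) (a : k) :
    ∑ j, X j * pderiv j (monomial s a) = s.degree • monomial s a :=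
  (isHomogeneous_monomial a rfl).sum_X_mul_pderiv

end PartialDerivatives

section Cayley

open Matrix

variable (k : Type*) [CommRing k]

/-- The first row of the generic `2 × 3` matrix. -/
noncomputable def firstRow (i : Fin 3) : MvPolynomial (Fin 6) k := X (Fin.castAdd 3 i)

/-- The second row of the generic `2 × 3` matrix. -/
noncomputable def secondRow (i : Fin 3) : MvPolynomial (Fin 6) k := X (Fin.natAdd 3 i)

/-- The signed maximal minors of the generic `2 × 3` matrix. -/
noncomputable abbrev genericMinor : Fin 3 → MvPolynomial (Fin 6) k := firstRow k ⨯₃ secondRow k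

theorem genericMinor_apply (i : Fin 3) :
    genericMinor k i = firstRow k (i + 1) * secondRow k (i + 2) -
      firstRow k (i + 2) * secondRow k (i + 1) := by
  fin_cases i <;> rfl

/-- The differential operator obtained from `genericMinor k i` by replacing each variable with the
corresponding partial derivative. -/
noncomputable def cayleyOperator (i : Fin 3) : Module.End k (MvPolynomial (Fin 6) k) :=
  (pderiv (Fin.natAdd 3 (i + 2))).toLinearMap ∘ₗ (pderiv (Fin.castAdd 3 (i + 1))).toLinearMap -
    (pderiv (Fin.natAdd 3 (i + 1))).toLinearMap ∘ₗ (pderiv (Fin.castAdd 3 (i + 2))).toLinearMap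

theorem apolar_genericMinor_mul (i : Fin 3) (f g : MvPolynomial (Fin 6) k) :
    apolar (genericMinor k i * f) g = apolar f (cayleyOperator k i g) := by
  simp only [genericMinor_apply, firstRow, secondRow, sub_mul, mul_assoc, map_sub,
    LinearMap.sub_apply, apolar_X_mul]
  rw [← map_sub]
  rfl

/-- The operator through which `cayleyOperator k i` acts on polynomials in the minors. -/
noncomputable def cayleyDescent (i : Fin 3) : Module.End k (MvPolynomial (Fin 3) k) :=
  2 • (pderiv i).toLinearMap +
    ∑ j, LinearMap.mulLeft k (X j) ∘ₗ (pderiv j).toLinearMap ∘ₗ (pderiv i).toLinearMap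

theorem cayleyDescent_apply (i : Fin 3) (p : MvPolynomial (Fin 3) k) :
    cayleyDescent k i p = 2 • pderiv i p + ∑ j, X j * pderiv j (pderiv i p) := by
  simp [cayleyDescent, LinearMap.sum_apply]

/-- Cayley's identity. -/
theorem cayleyOperator_aeval_genericMinor (i : Fin 3) (p : MvPolynomial (Fin 3) k) :
    cayleyOperator k i (aeval (genericMinor k) p) =
      aeval (genericMinor k) (cayleyDescent k i p) := by
  simp only [cayleyDescent_apply, cayleyOperator, LinearMap.sub_apply, LinearMap.comp_apply,
    Derivation.coeFn_coe, derivation_aeval, Derivation.leibniz, smul_eq_mul, map_add, map_mul,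
    map_nsmul, aeval_X, Fin.sum_univ_three]
  fin_cases i <;>
    simp [genericMinor_apply, firstRow, secondRow, pderiv_X, pderiv_pderiv_comm (1 : Fin 3) 0,
      pderiv_pderiv_comm (2 : Fin 3) 0, pderiv_pderiv_comm (2 : Fin 3) 1] <;>
    ring

theorem degree_sub_single_add {σ : Type*} {s : σ →₀ ℕ} {i : σ} {n : ℕ} (h : n ≤ s i) :
    (s - Finsupp.single i n).degree + n = s.degree := by
  conv_rhs => rw [← tsub_add_cancel_of_le (Finsupp.single_le_iff.2 h : Finsupp.single i n ≤ s)]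
  rw [map_add, Finsupp.degree_single]

theorem cayleyDescent_monomial (i : Fin 3) (s : Fin 3 →₀ ℕ) (a : k) :
    cayleyDescent k i (monomial s a) =
      monomial (s - Finsupp.single i 1) (a * (s i * (s.degree + 1) : ℕ)) := by
  rw [cayleyDescent_apply, pderiv_monomial, sum_X_mul_pderiv_monomial, ← add_smul, smul_monomial]
  rcases Nat.eq_zero_or_pos (s i) with hs | hs
  · simp [hs]
  · rw [← degree_sub_single_add hs, nsmul_eq_mul]
    push_cast
    ring_nf

theorem cayleyDescent_pow_monomial (i : Fin 3) (n : ℕ) (s : Fin 3 →₀ ℕ) (a : k) :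
    (cayleyDescent k i ^ n) (monomial s a) = monomial (s - Finsupp.single i n)
      (a * ((s i).descFactorial n * (s.degree + 1).descFactorial n : ℕ)) := by
  induction n with
  | zero => simp
  | succ n ih =>
    rw [pow_succ', Module.End.mul_apply, ih, cayleyDescent_monomial, tsub_tsub,
      ← Finsupp.single_add, mul_assoc, ← Nat.cast_mul]
    congr 3
    rcases le_or_gt (s i) n with hs | hs
    · simp [Nat.descFactorial_succ, hs]
    · rw [Nat.descFactorial_succ, Nat.descFactorial_succ, ← degree_sub_single_add hs.le]
      simp only [Nat.add_right_comm _ n 1, Finsupp.coe_tsub, Pi.sub_apply,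
        Finsupp.single_eq_same, add_tsub_cancel_right]
      ring

variable {k}

theorem apolar_genericMinor_pow_mul (i : Fin 3) (n : ℕ) (f : MvPolynomial (Fin 6) k)
    (s : Fin 3 →₀ ℕ) (a : k) :
    apolar (genericMinor k i ^ n * f) (aeval (genericMinor k) (monomial s a)) =
      apolar f (aeval (genericMinor k) (monomial (s - Finsupp.single i n)
        (a * ((s i).descFactorial n * (s.degree + 1).descFactorial n : ℕ)))) := by
  have h (p) : (cayleyOperator k i ^ n) (aeval (genericMinor k) p) =
      aeval (genericMinor k) ((cayleyDescent k i ^ n) p) := by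
    induction n with
    | zero => rfl
    | succ n ih =>
      rw [pow_succ', pow_succ', Module.End.mul_apply, ih, cayleyOperator_aeval_genericMinor]
      rfl
  rw [apolar_pow_mul (apolar_genericMinor_mul k i), h, cayleyDescent_pow_monomial]

theorem apolar_eq_zero_of_mem_span_genericMinor_pow {n : ℕ} {f : MvPolynomial (Fin 6) k}
    (hf : f ∈ Ideal.span (Set.range (genericMinor k ^ n))) {s : Fin 3 →₀ ℕ} (hs : ∀ i, s i < n)
    (a : k) : apolar f (aeval (genericMinor k) (monomial s a)) = 0 := by
  obtain ⟨c, rfl⟩ := Ideal.mem_span_range_iff_exists_fun.1 hf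
  rw [map_sum, LinearMap.sum_apply]
  refine Finset.sum_eq_zero fun i _ ↦ ?_
  rw [Pi.pow_apply, mul_comm, apolar_genericMinor_pow_mul, Nat.descFactorial_of_lt (hs i)]
  simp

theorem apolar_one_aeval_monomial_zero {σ τ : Type*} (m : τ → MvPolynomial σ k) (c : k) :
    apolar 1 (aeval m (monomial 0 c)) = c := by
  rw [← C_apply, algHom_C, ← C_1, C_apply, apolar_monomial]
  simp [algebraMap_eq]

theorem descFactorial_mul_mul_descFactorial (n : ℕ) :
    (3 * n + 1).descFactorial n * (2 * n + 1).descFactorial n * (n + 1).descFactorial n =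
      (3 * n + 1).factorial := by
  have h (m) : (m + 1).factorial * (m + n + 1).descFactorial n = (m + n + 1).factorial := by
    simpa [Nat.add_right_comm m n 1] using
      Nat.factorial_mul_descFactorial (Nat.le_add_left n (m + 1))
  have h₀ := h 0
  have h₁ := h n
  have h₂ := h (2 * n)
  simp only [zero_add, Nat.factorial_one, one_mul] at h₀
  rw [← two_mul, ← h₀] at h₁
  rw [← Nat.succ_mul, ← h₁] at h₂
  rw [← h₂]
  ring

theorem apolar_prod_genericMinor_pow (n : ℕ) :
    apolar ((genericMinor k 0 * genericMinor k 1 * genericMinor k 2) ^ n)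
      (aeval (genericMinor k) (monomial (Finsupp.equivFunOnFinite.symm fun _ ↦ n) (1 : k))) =
      (n.factorial ^ 3 * (3 * n + 1).factorial : ℕ) := by
  set s : Fin 3 →₀ ℕ := Finsupp.equivFunOnFinite.symm fun _ ↦ n
  set s₁ : Fin 3 →₀ ℕ := s - Finsupp.single 0 n with hs₁
  set s₂ : Fin 3 →₀ ℕ := s₁ - Finsupp.single 1 n with hs₂
  have h₀ (i) : s i = n := rfl
  have h₁ : s₁ 1 = n := by simp [hs₁, h₀]
  have h₂ : s₂ 2 = n := by simp [hs₂, hs₁, h₀]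
  have hdeg₀ : s.degree = 3 * n := by simp [Finsupp.degree_eq_sum, h₀]
  have hdeg₁ : s₁.degree + n = s.degree := degree_sub_single_add (h₀ 0).ge
  have hdeg₂ : s₂.degree + n = s₁.degree := degree_sub_single_add h₁.ge
  have hs₃ : s₂ - Finsupp.single 2 n = 0 := by
    ext i
    fin_cases i <;> simp [hs₂, hs₁, h₀]
  rw [mul_pow, mul_pow, mul_assoc, ← mul_one (genericMinor k 2 ^ n), apolar_genericMinor_pow_mul,
    apolar_genericMinor_pow_mul, apolar_genericMinor_pow_mul, ← hs₁, ← hs₂, hs₃,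
    apolar_one_aeval_monomial_zero, h₀, h₁, h₂, Nat.descFactorial_self, hdeg₀,
    show s₁.degree = 2 * n by omega, show s₂.degree = n by omega,
    ← descFactorial_mul_mul_descFactorial]
  push_cast
  ring

theorem prod_genericMinor_pow_notMem_span [CharZero k] (n : ℕ) :
    (genericMinor k 0 * genericMinor k 1 * genericMinor k 2) ^ n ∉
      Ideal.span (Set.range (genericMinor k ^ (n + 1))) := fun h ↦ by
  have h0 := apolar_eq_zero_of_mem_span_genericMinor_pow h
    (s := Finsupp.equivFunOnFinite.symm fun _ ↦ n) (fun _ ↦ n.lt_succ_self) 1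
  rw [apolar_prod_genericMinor_pow, Nat.cast_eq_zero] at h0
  exact absurd h0 (by positivity)

end Cayley

section GenericRegularity

open Matrix RingTheory.Sequence

theorem ker_aeval_indicator_compl_X {σ k : Type*} [CommRing k] (s : Set σ) :
    RingHom.ker (aeval (sᶜ.indicator X) : MvPolynomial σ k →ₐ[k] MvPolynomial σ k) =
      Ideal.span (X '' s) := by
  set J : Ideal (MvPolynomial σ k) := Ideal.span (X '' s)
  refine le_antisymm (fun p hp ↦ ?_) (Ideal.span_le.2 ?_)
  · have h : (Ideal.Quotient.mkₐ k J).comp (aeval (sᶜ.indicator X)) = Ideal.Quotient.mkₐ k J := by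
      ext i
      by_cases hi : i ∈ s
      · have : X i ∈ J := Ideal.subset_span (Set.mem_image_of_mem X hi)
        simpa [hi] using (Ideal.Quotient.eq_zero_iff_mem.2 this).symm
      · simp [hi]
    rw [← Ideal.Quotient.eq_zero_iff_mem, ← Ideal.Quotient.mkₐ_eq_mk k, ← h, AlgHom.comp_apply,
      (RingHom.mem_ker ..).1 hp, map_zero]
  · rintro _ ⟨i, hi, rfl⟩
    simp [RingHom.mem_ker, hi]

theorem isPrime_span_image_X {σ k : Type*} [CommRing k] [IsDomain k] (s : Set σ) :
    (Ideal.span (X '' s : Set (MvPolynomial σ k))).IsPrime :=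
  ker_aeval_indicator_compl_X (k := k) s ▸ RingHom.ker_isPrime _

theorem isRelPrime_X_X {σ k : Type*} [CommRing k] [IsDomain k] {i j : σ} (hij : i ≠ j) :
    IsRelPrime (X i : MvPolynomial σ k) (X j) :=
  X_prime.irreducible.isRelPrime_iff_not_dvd.2 (X_dvd_X.not.2 hij)

variable (k : Type*) [CommRing k] [IsDomain k] [UniqueFactorizationMonoid k]

theorem irreducible_genericMinor_zero : Irreducible (genericMinor k 0) := by
  classical
  have h : genericMinor k 0 = X 1 * X 5 + -(X 2 * X 4) := sub_eq_add_neg _ _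
  rw [h]
  refine irreducible_mul_X_add _ _ _ (X_ne_zero _) (by simp) (fun h5 ↦ ?_) ?_
  · rw [vars_neg] at h5
    simpa using vars_mul _ _ h5
  · exact ((isRelPrime_X_X (by decide)).mul_right (isRelPrime_X_X (by decide))).neg_right

theorem isRelPrime_genericMinor_zero_one : IsRelPrime (genericMinor k 0) (genericMinor k 1) := by
  refine (irreducible_genericMinor_zero k).isRelPrime_iff_not_dvd.2 fun h ↦ ?_
  have := map_dvd (eval ![0, 0, 1, 1, 0, 0]) h
  simp [genericMinor_apply, firstRow, secondRow] at this

theorem isWeaklyRegular_firstRow_secondRow_genericMinor_two :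
    IsWeaklyRegular (MvPolynomial (Fin 6) k) [firstRow k 2, secondRow k 2, genericMinor k 2] := by
  refine isWeaklyRegular_triple_iff.2 ⟨isWeaklyRegular_pair_of_isRelPrime (X_ne_zero _)
    (isRelPrime_X_X (by decide)), fun q hq ↦ ?_⟩
  have hspan : Ideal.span {firstRow k 2, secondRow k 2} = Ideal.span (X '' {2, 5}) := by
    rw [Set.image_pair]
    rfl
  rw [hspan] at hq ⊢
  refine ((isPrime_span_image_X _).mem_or_mem hq).resolve_left fun h ↦ ?_
  have : (Ideal.span (X '' {2, 5})).map (eval ![(1 : k), 0, 0, 0, 1, 0]) = ⊥ := by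
    simp [Ideal.map_span, Set.image_pair]
  have := this ▸ Ideal.mem_map_of_mem (eval ![(1 : k), 0, 0, 0, 1, 0]) h
  simp [genericMinor_apply, firstRow, secondRow] at this

end GenericRegularity

end MinorsLocalCohomology

open MinorsLocalCohomology in
theorem localCohomology_three_of_minors_ne_zero_complex_general {k : Type*} [CommRing k]
    [IsDomain k] [UniqueFactorizationMonoid k] [IsNoetherianRing k] [CharZero k] :
    let R := MvPolynomial (Fin 6) k
    let u : R := X 0; let v : R := X 1; let w : R := X 2
    let x : R := X 3; let y : R := X 4; let z : R := X 5
    let I : Ideal R := Ideal.span {v * z - w * y, w * x - u * z, u * y - v * x}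
    Nontrivial ((localCohomology I 3).obj (ModuleCat.of R R)) ∧
      ¬ ∃ f g : R, (Ideal.span {f, g}).radical = I.radical := by
  intro R u v w x y z I
  have hI : I = Ideal.span (Set.range (genericMinor k)) := by
    rw [genericMinor, cross_apply, Matrix.range_cons, Matrix.range_cons_cons_empty,
      Set.singleton_union]
    rfl
  have hmem (i) : genericMinor k i ∈ I := hI ▸ Ideal.subset_span (Set.mem_range_self i)
  have hcoprime := isRelPrime_genericMinor_zero_one k
  have hnontrivial : Nontrivial ((localCohomology I 3).obj (ModuleCat.of R R)) := by
    rw [hI]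
    exact nontrivial_localCohomology_three_of_pow_notMem
      (isWeaklyRegular_pair_of_isRelPrime (irreducible_genericMinor_zero k).ne_zero hcoprime)
      (isWeaklyRegular_firstRow_secondRow_genericMinor_two k) prod_genericMinor_pow_notMem_span
  refine ⟨hnontrivial, fun ⟨f, g, h⟩ ↦ not_nontrivial_iff_subsingleton.2 ?_ hnontrivial⟩
  exact subsingleton_localCohomology_of_radical_eq (hmem 0) (hmem 1) hcoprime h 0 (ModuleCat.of R R)

theorem localCohomology_three_of_minors_ne_zero_complex :
    let R := MvPolynomial (Fin 6) ℂ
    let u : R := X 0; let v : R := X 1; let w : R := X 2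
    let x : R := X 3; let y : R := X 4; let z : R := X 5
    let I : Ideal R := Ideal.span {v * z - w * y, w * x - u * z, u * y - v * x}
    Nontrivial ((localCohomology I 3).obj (ModuleCat.of R R)) ∧
      ¬ ∃ f g : R, (Ideal.span {f, g}).radical = I.radical :=
  localCohomology_three_of_minors_ne_zero_complex_general
end

section
/- Let R = ℤ[u,v,w,x,y,z], let I₀ be the ideal of 2×2 minors of the matrix with rows (u,v,w),(x,y,z), and let I = I₀ + (x³+y³+z³, ux²+vy²+wz², u²x+v²y+w²z, u³+v³+w³). Then R/I admits a finite free resolution of the form 0 → R → R⁶ → R¹¹ → R⁷ → R → R/I → 0; in particular R/I has projective dimension 4 over R and Ext^j_R(R/I, R) = 0 for j > 4. -/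
/-!
STATEMENT 16: Let `R = ℤ[u,v,w,x,y,z]`, `I₀` the ideal of `2×2` minors of the
matrix with rows `(u,v,w),(x,y,z)`, and
`I = I₀ + (x³+y³+z³, ux²+vy²+wz², u²x+v²y+w²z, u³+v³+w³)`.  Then `R/I` admits a
finite free resolution `0 → R → R⁶ → R¹¹ → R⁷ → R → R/I → 0`; in particular `R/I`
has projective dimension `4` over `R` (expressed by `Ext⁴_R(R/I,R) ≠ 0`) and
`Ext^j_R(R/I, R) = 0` for `j > 4`.
-/

open CategoryTheory MvPolynomial

noncomputable section

abbrev R16 : Type := MvPolynomial (Fin 6) ℤ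

namespace Stmt16

def u : R16 := X 0
def v : R16 := X 1
def w : R16 := X 2
def x : R16 := X 3
def y : R16 := X 4
def z : R16 := X 5

def I : Ideal R16 := Ideal.span
  ({v * z - w * y, w * x - u * z, u * y - v * x,
    x ^ 3 + y ^ 3 + z ^ 3, u * x ^ 2 + v * y ^ 2 + w * z ^ 2,
    u ^ 2 * x + v ^ 2 * y + w ^ 2 * z, u ^ 3 + v ^ 3 + w ^ 3} : Set R16)

/-!
On the Segre cone the fractions `u / x = v / y = w / z` agree; adjoin their common value as a
variable `T`, and let `L` be the prime ideal of `R[T]` generated by the linear forms `x T - u`,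
`y T - v`, `z T - w`. Put `F = x³ + y³ + z³`. The four cubics of `I` are `F, F T, F T², F T³`
modulo `L`, so if `∑ cⱼ Tʲ` is formed from the coefficients of the cubics in a syzygy of the
generators of `I`, then `F * ∑ cⱼ Tʲ ∈ L`, and `∑ cⱼ Tʲ ∈ L` because `F ∉ L`.

Syzygies of the cubics modulo the minors are therefore governed by the Koszul complex on the linear
forms, restricted to the strand of polynomials of `T`-degree at most `0, 1, 2, 3`, whose terms have
rank `1, 6, 9, 4` over `R`. This strand is exact because the Koszul complex is and because the
`T`-degree of a preimage can be lowered: its leading coefficient is a cycle of the Koszul complex on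
`x, y, z`, hence a boundary. The mapping cone of a map from the strand to the Hilbert–Burch
resolution `0 → R² → R³ → R` of `R / I₀` is the resolution sought. All entries of its last
differential lie in the irrelevant ideal, so `Ext⁴(R / I, R) ≠ 0`.
-/

open scoped Matrix Polynomial

section Ext

universe s t

section Abelian

variable {A : Type*} [Ring A] {C : Type*} [Category C] [Abelian C] [Linear A C]
  [EnoughProjectives C] {Z : C} (P : ProjectiveResolution Z)

lemma isZero_ext_of_isZero {n : ℕ} (h : Limits.IsZero (P.complex.X n)) (N : C) :
    Limits.IsZero (((Ext A C n).obj (Opposite.op Z)).obj N) := by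
  refine .of_iso ?_ (P.isoExt n N)
  rw [← HomologicalComplex.exactAt_iff_isZero_homology, HomologicalComplex.exactAt_iff]
  refine ShortComplex.exact_of_isZero_X₂ _ (@ModuleCat.isZero_of_subsingleton _ _ _ ?_)
  exact ⟨fun f g ↦ h.eq_of_src f g⟩

lemma not_isZero_ext_of_isZero_of_comp_ne {n : ℕ} (h : Limits.IsZero (P.complex.X (n + 2))) {N : C}
    (g : P.complex.X (n + 1) ⟶ N) (hg : ∀ f, P.complex.d (n + 1) n ≫ f ≠ g) :
    ¬ Limits.IsZero (((Ext A C (n + 1)).obj (Opposite.op Z)).obj N) := by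
  intro hExt
  have hN := hExt.of_iso (P.isoExt (n + 1) N).symm
  rw [← HomologicalComplex.exactAt_iff_isZero_homology,
    HomologicalComplex.exactAt_iff' _ n (n + 1) (n + 2) (by simp) (by simp),
    ShortComplex.moduleCat_exact_iff] at hN
  obtain ⟨f, hf⟩ := hN g (h.eq_of_src _ _)
  exact hg f hf

end Abelian

section ResolutionOfExact

variable {A : Type s} [Ring A] {M : ModuleCat.{t} A} {X : ℕ → ModuleCat.{t} A}
  (d : ∀ n, X (n + 1) ⟶ X n) (ε : X 0 ⟶ M)
  (hd : ∀ n, Function.Exact (d (n + 1)) (d n)) (h₀ : Function.Exact (d 0) ε)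
  (hε : Function.Surjective ε)

/-- The complex of modules `⋯ → X 2 → X 1 → X 0` whose exactness at `X (n + 1)` is `hd n`. -/
def complexOfExact : ChainComplex (ModuleCat.{t} A) ℕ :=
  .of X d fun n ↦ ModuleCat.hom_ext (hd n).linearMap_comp_eq_zero

lemma complexOfExact_d (n : ℕ) : (complexOfExact d hd).d (n + 1) n = d n :=
  ChainComplex.of_d _ _ _

/-- The augmentation of `complexOfExact d hd` induced by `ε : X 0 ⟶ M`. -/
def complexOfExactπ : complexOfExact d hd ⟶ (ChainComplex.single₀ _).obj M :=
  (ChainComplex.toSingle₀Equiv _ _).symm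
    ⟨ε, by rw [complexOfExact_d]; exact ModuleCat.hom_ext h₀.linearMap_comp_eq_zero⟩

lemma complexOfExactπ_f_zero : (complexOfExactπ d ε hd h₀).f 0 = ε :=
  ChainComplex.toSingle₀Equiv_symm_apply_f_zero _ _

lemma exactAt_complexOfExact (n : ℕ) : (complexOfExact d hd).ExactAt (n + 1) := by
  rw [HomologicalComplex.exactAt_iff' _ (n + 1 + 1) (n + 1) n (by simp) (by simp),
    ShortComplex.moduleCat_exact_iff]
  dsimp only [HomologicalComplex.sc', HomologicalComplex.shortComplexFunctor']
  rw [complexOfExact_d, complexOfExact_d]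
  exact fun x hx ↦ (hd n x).mp hx

include hε in
lemma quasiIso_complexOfExactπ : QuasiIso (complexOfExactπ d ε hd h₀) := by
  refine ⟨fun n ↦ ?_⟩
  cases n with
  | zero =>
    rw [ChainComplex.quasiIsoAt₀_iff, ShortComplex.quasiIso_iff_of_zeros' _ rfl rfl rfl,
      ShortComplex.moduleCat_exact_iff, ModuleCat.epi_iff_surjective]
    dsimp only [HomologicalComplex.sc', HomologicalComplex.shortComplexFunctor']
    rw [complexOfExactπ_f_zero, complexOfExact_d]
    exact ⟨fun x hx ↦ (h₀ x).mp hx, hε⟩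
  | succ n =>
    rw [quasiIsoAt_iff_exactAt' _ _ (ChainComplex.exactAt_succ_single_obj _ _)]
    exact exactAt_complexOfExact d hd n

/-- The projective resolution of `M` given by an exact sequence `⋯ → X 1 → X 0 → M → 0` of modules
with projective terms. -/
def projectiveResolutionOfExact [∀ n, Projective (X n)] : ProjectiveResolution M where
  complex := complexOfExact d hd
  projective n := inferInstanceAs (Projective (X n))
  π := complexOfExactπ d ε hd h₀
  quasiIso := quasiIso_complexOfExactπ d ε hd h₀ hε

end ResolutionOfExact

section LengthFour

variable {A : Type s} [CommRing A] {M P₀ P₁ P₂ P₃ P₄ : Type s}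
  [AddCommGroup M] [Module A M] [AddCommGroup P₀] [Module A P₀] [AddCommGroup P₁] [Module A P₁]
  [AddCommGroup P₂] [Module A P₂] [AddCommGroup P₃] [Module A P₃] [AddCommGroup P₄] [Module A P₄]

/-- Exactness of `0 → P₄ → P₃ → P₂ → P₁ → P₀ → M → 0`. -/
structure IsLengthFourResolution (d₄ : P₄ →ₗ[A] P₃) (d₃ : P₃ →ₗ[A] P₂) (d₂ : P₂ →ₗ[A] P₁)
    (d₁ : P₁ →ₗ[A] P₀) (ε : P₀ →ₗ[A] M) : Prop where
  injective : Function.Injective d₄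
  exact_d₄_d₃ : Function.Exact d₄ d₃
  exact_d₃_d₂ : Function.Exact d₃ d₂
  exact_d₂_d₁ : Function.Exact d₂ d₁
  exact_d₁_ε : Function.Exact d₁ ε
  surjective : Function.Surjective ε

namespace IsLengthFourResolution

variable {d₄ : P₄ →ₗ[A] P₃} {d₃ : P₃ →ₗ[A] P₂} {d₂ : P₂ →ₗ[A] P₁} {d₁ : P₁ →ₗ[A] P₀}
  {ε : P₀ →ₗ[A] M} (h : IsLengthFourResolution d₄ d₃ d₂ d₁ ε)
  [Module.Projective A P₀] [Module.Projective A P₁] [Module.Projective A P₂]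
  [Module.Projective A P₃] [Module.Projective A P₄]
include h

lemma exists_projectiveResolution :
    ∃ P : ProjectiveResolution (ModuleCat.of A M),
      (∀ n, 4 < n → Limits.IsZero (P.complex.X n)) ∧
      ∃ (e₃ : P.complex.X 3 ≅ ModuleCat.of A P₃) (e₄ : P.complex.X 4 ≅ ModuleCat.of A P₄),
        P.complex.d 4 3 ≫ e₃.hom = e₄.hom ≫ ModuleCat.ofHom d₄ := by
  let X : ℕ → ModuleCat.{s} A
    | 0 => .of A P₀
    | 1 => .of A P₁
    | 2 => .of A P₂
    | 3 => .of A P₃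
    | 4 => .of A P₄
    | _ + 5 => .of A PUnit
  let d : ∀ n, X (n + 1) ⟶ X n
    | 0 => ModuleCat.ofHom d₁
    | 1 => ModuleCat.ofHom d₂
    | 2 => ModuleCat.ofHom d₃
    | 3 => ModuleCat.ofHom d₄
    | _ + 4 => 0
  have hX : ∀ n, Projective (X n)
    | 0 => inferInstanceAs (Projective (ModuleCat.of A P₀))
    | 1 => inferInstanceAs (Projective (ModuleCat.of A P₁))
    | 2 => inferInstanceAs (Projective (ModuleCat.of A P₂))
    | 3 => inferInstanceAs (Projective (ModuleCat.of A P₃))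
    | 4 => inferInstanceAs (Projective (ModuleCat.of A P₄))
    | _ + 5 => inferInstanceAs (Projective (ModuleCat.of A PUnit))
  have hd : ∀ n, Function.Exact (d (n + 1)) (d n)
    | 0 => h.exact_d₂_d₁
    | 1 => h.exact_d₃_d₂
    | 2 => h.exact_d₄_d₃
    | 3 => fun x ↦ ⟨fun hx ↦ ⟨0, (h.injective (hx.trans (map_zero d₄).symm)).symm⟩,
        fun ⟨_, hx⟩ ↦ hx ▸ map_zero d₄⟩
    | _ + 4 => fun _ ↦ ⟨fun _ ↦ ⟨0, rfl⟩, fun _ ↦ rfl⟩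
  refine ⟨projectiveResolutionOfExact d (ModuleCat.ofHom ε) hd h.exact_d₁_ε h.surjective,
    fun n hn ↦ ?_, Iso.refl _, Iso.refl _, complexOfExact_d d hd 3⟩
  obtain ⟨n, rfl⟩ := Nat.exists_eq_add_of_le' hn
  exact ModuleCat.isZero_of_subsingleton (ModuleCat.of A PUnit)

lemma subsingleton_ext {n : ℕ} (hn : 4 < n) (N : ModuleCat.{s} A) : Subsingleton
    (((Ext A (ModuleCat.{s} A) n).obj (Opposite.op (ModuleCat.of A M))).obj N) := by
  obtain ⟨P, hP, -⟩ := h.exists_projectiveResolution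
  exact ModuleCat.subsingleton_of_isZero (isZero_ext_of_isZero P (hP n hn) N)

lemma nontrivial_ext {N : Type s} [AddCommGroup N] [Module A N] (g : P₄ →ₗ[A] N)
    (hg : ∀ f : P₃ →ₗ[A] N, f ∘ₗ d₄ ≠ g) : Nontrivial
    (((Ext A (ModuleCat.{s} A) 4).obj (Opposite.op (ModuleCat.of A M))).obj (.of A N)) := by
  obtain ⟨P, hP, e₃, e₄, he⟩ := h.exists_projectiveResolution
  rw [← not_subsingleton_iff_nontrivial]
  intro hsub
  refine not_isZero_ext_of_isZero_of_comp_ne (A := A) P (n := 3) (hP 5 (by simp))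
    (e₄.hom ≫ ModuleCat.ofHom g) (fun f hf ↦ hg (e₃.inv ≫ f).hom ?_)
    (ModuleCat.isZero_of_subsingleton _)
  have hfac : ModuleCat.ofHom d₄ ≫ e₃.inv ≫ f = ModuleCat.ofHom g := by
    rw [← cancel_epi e₄.hom, ← hf, ← Category.assoc, ← he, Category.assoc, e₃.hom_inv_id_assoc]
  exact congrArg ModuleCat.Hom.hom hfac

end IsLengthFourResolution

end LengthFour

end Ext

section Koszul

variable {R : Type*} [CommRing R]

/-- The Koszul differential `R³ → R` on `r₀, r₁, r₂`. -/
def koszul₁ (r : Fin 3 → R) : Matrix (Fin 1) (Fin 3) R := !![r 0, r 1, r 2]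

/-- The Koszul differential `Λ²R³ = R³ → R³` on `r₀, r₁, r₂`, in the basis of `Λ²R³` in which it is
the cross product with `r`. -/
def koszul₂ (r : Fin 3 → R) : Matrix (Fin 3) (Fin 3) R :=
  !![0, -r 2, r 1; r 2, 0, -r 0; -r 1, r 0, 0]

/-- The Koszul differential `Λ³R³ = R → Λ²R³ = R³` on `r₀, r₁, r₂`. -/
def koszul₃ (r : Fin 3 → R) : Matrix (Fin 3) (Fin 1) R := !![r 0; r 1; r 2]

lemma koszul₁_mulVec (r a : Fin 3 → R) :
    koszul₁ r *ᵥ a = ![r 0 * a 0 + r 1 * a 1 + r 2 * a 2] := by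
  ext i
  fin_cases i
  simp [koszul₁, Matrix.mulVec, dotProduct, Fin.sum_univ_three]

lemma koszul₂_mulVec (r b : Fin 3 → R) : koszul₂ r *ᵥ b =
    ![r 1 * b 2 - r 2 * b 1, r 2 * b 0 - r 0 * b 2, r 0 * b 1 - r 1 * b 0] := by
  ext i
  fin_cases i <;> simp [koszul₂, Matrix.mulVec, dotProduct, Fin.sum_univ_three] <;> ring

lemma koszul₃_mulVec (r : Fin 3 → R) (t : Fin 1 → R) :
    koszul₃ r *ᵥ t = ![r 0 * t 0, r 1 * t 0, r 2 * t 0] := by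
  ext i
  fin_cases i <;> simp [koszul₃, Matrix.mulVec, dotProduct]

lemma koszul₁_mul_koszul₂ (r : Fin 3 → R) : koszul₁ r * koszul₂ r = 0 := by
  ext i j
  fin_cases i; fin_cases j <;> simp [koszul₁, koszul₂] <;> ring

lemma koszul₂_mul_koszul₃ (r : Fin 3 → R) : koszul₂ r * koszul₃ r = 0 := by
  ext i j
  fin_cases i <;> fin_cases j <;> simp [koszul₂, koszul₃] <;> ring

/-- A regular sequence `r₀, r₁, r₂` of a domain in which `r₀` and `(r₀, r₁)` are moreover prime. -/
structure IsPrimeSequence (r : Fin 3 → R) : Prop where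
  prime_zero : Prime (r 0)
  not_dvd : ¬ r 0 ∣ r 1
  isPrime_span : (Ideal.span {r 0, r 1}).IsPrime
  notMem_span : r 2 ∉ Ideal.span {r 0, r 1}

lemma exists_eq_mul_of_prime_of_not_dvd [IsDomain R] {p q a b : R} (hp : Prime p)
    (hpq : ¬ p ∣ q) (h : a * p + b * q = 0) : ∃ t, a = t * q ∧ b = -t * p := by
  obtain ⟨t, ht⟩ : p ∣ b :=
    (hp.dvd_or_dvd ⟨-a, by linear_combination h⟩).resolve_right hpq
  exact ⟨-t, mul_right_cancel₀ hp.ne_zero (by linear_combination h - q * ht),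
    by linear_combination ht⟩

namespace IsPrimeSequence

variable [IsDomain R] {r : Fin 3 → R} (hr : IsPrimeSequence r)
include hr

lemma exact_koszul₂_koszul₁ : Function.Exact (koszul₂ r).mulVec (koszul₁ r).mulVec := by
  refine fun a ↦ ⟨fun ha ↦ ?_, ?_⟩
  · have h : r 0 * a 0 + r 1 * a 1 + r 2 * a 2 = 0 := congrFun (koszul₁_mulVec r a ▸ ha) 0
    obtain ⟨s, t, hst⟩ : ∃ s t, s * r 0 + t * r 1 = a 2 := Ideal.mem_span_pair.mp <|
      (hr.isPrime_span.mem_or_mem (Ideal.mem_span_pair.mpr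
        ⟨-a 0, -a 1, by linear_combination -h⟩)).resolve_right hr.notMem_span
    obtain ⟨k, h₀, h₁⟩ := exists_eq_mul_of_prime_of_not_dvd hr.prime_zero hr.not_dvd
      (a := a 0 + s * r 2) (b := a 1 + t * r 2) (by linear_combination h + r 2 * hst)
    refine ⟨![-t, s, k], (koszul₂_mulVec _ _).trans (funext fun i ↦ ?_)⟩
    fin_cases i
    · change r 1 * k - r 2 * s = a 0
      linear_combination -h₀
    · change r 2 * -t - r 0 * k = a 1
      linear_combination -h₁
    · change r 0 * s - r 1 * -t = a 2
      linear_combination hst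
  · rintro ⟨b, rfl⟩
    rw [Matrix.mulVec_mulVec, koszul₁_mul_koszul₂, Matrix.zero_mulVec]

lemma exact_koszul₃_koszul₂ : Function.Exact (koszul₃ r).mulVec (koszul₂ r).mulVec := by
  refine fun b ↦ ⟨fun hb ↦ ?_, ?_⟩
  · have h₁ : r 2 * b 0 - r 0 * b 2 = 0 := congrFun (koszul₂_mulVec r b ▸ hb) 1
    have h₂ : r 0 * b 1 - r 1 * b 0 = 0 := congrFun (koszul₂_mulVec r b ▸ hb) 2
    obtain ⟨t, ht₁, ht₀⟩ := exists_eq_mul_of_prime_of_not_dvd hr.prime_zero hr.not_dvd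
      (a := b 1) (b := -b 0) (by linear_combination h₂)
    have ht₂ : b 2 = t * r 2 :=
      mul_right_cancel₀ hr.prime_zero.ne_zero (by linear_combination -h₁ - r 2 * ht₀)
    refine ⟨![t], (koszul₃_mulVec _ _).trans (funext fun i ↦ ?_)⟩
    fin_cases i
    · change r 0 * t = b 0
      linear_combination ht₀
    · change r 1 * t = b 1
      linear_combination -ht₁
    · change r 2 * t = b 2
      linear_combination -ht₂
  · rintro ⟨t, rfl⟩
    rw [Matrix.mulVec_mulVec, koszul₂_mul_koszul₃, Matrix.zero_mulVec]

lemma koszul₃_mulVec_injective : Function.Injective (koszul₃ r).mulVec := by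
  intro s t h
  rw [koszul₃_mulVec, koszul₃_mulVec] at h
  have h₀ : r 0 * s 0 = r 0 * t 0 := congrFun h 0
  ext i
  rw [Subsingleton.elim i 0]
  exact mul_left_cancel₀ hr.prime_zero.ne_zero h₀

end IsPrimeSequence

end Koszul

section Pencil

variable {R : Type*} [CommRing R] {m n p : Type*} [Fintype n] [Fintype p]

/-- The matrix pencil `T A - B`, over the polynomial ring in the variable `T`. -/
def pencil (A B : Matrix m n R) : Matrix m n R[X] :=
  (Polynomial.X : R[X]) • A.map Polynomial.C - B.map Polynomial.C

lemma coeff_pencil_mulVec_succ (A B : Matrix m n R) (a : n → R[X]) (i : m) (k : ℕ) :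
    ((pencil A B *ᵥ a) i).coeff (k + 1) =
      (A *ᵥ fun j ↦ (a j).coeff k) i - (B *ᵥ fun j ↦ (a j).coeff (k + 1)) i := by
  simp [pencil, Matrix.mulVec, dotProduct, sub_mul, mul_assoc]

lemma exists_natDegree_le_of_natDegree_le_succ {A₀ B₀ : Matrix m n R} {A₁ B₁ : Matrix n p R}
    (hA : Function.Exact A₁.mulVec A₀.mulVec) (h : pencil A₀ B₀ * pencil A₁ B₁ = 0)
    {a : n → R[X]} {k : ℕ} (ha : ∀ j, (a j).natDegree ≤ k + 1)
    (hk : ∀ i, ((pencil A₀ B₀ *ᵥ a) i).natDegree ≤ k + 1) :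
    ∃ a' : n → R[X], (∀ j, (a' j).natDegree ≤ k) ∧ pencil A₀ B₀ *ᵥ a' = pencil A₀ B₀ *ᵥ a := by
  have hlead : A₀ *ᵥ (fun j ↦ (a j).coeff (k + 1)) = 0 := by
    funext i
    have ha' : (fun j ↦ (a j).coeff (k + 1 + 1)) = 0 :=
      funext fun j ↦ Polynomial.coeff_eq_zero_of_natDegree_lt ((ha j).trans_lt (by lia))
    have hi := Polynomial.coeff_eq_zero_of_natDegree_lt ((hk i).trans_lt (Nat.lt_succ_self _))
    simpa [coeff_pencil_mulVec_succ, ha'] using hi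
  -- Subtracting the image of `b T ^ k` cancels the leading coefficient `A₁ b` of `a`.
  obtain ⟨b, hb⟩ := (hA _).mp hlead
  set b' : p → R[X] := fun l ↦ Polynomial.monomial k (b l) with hb'
  refine ⟨a - pencil A₁ B₁ *ᵥ b', fun j ↦ Polynomial.natDegree_le_iff_coeff_eq_zero.mpr ?_, ?_⟩
  · rintro (_ | N) hN
    · simp at hN
    have hbN : (fun l ↦ (b' l).coeff (N + 1)) = 0 :=
      funext fun l ↦ by simp [hb', Polynomial.coeff_monomial, hN.ne]
    rw [Pi.sub_apply, Polynomial.coeff_sub, coeff_pencil_mulVec_succ, hbN, Matrix.mulVec_zero]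
    obtain rfl | hNk := eq_or_ne N k
    · simp [hb', hb]
    · have : (fun l ↦ (b' l).coeff N) = 0 :=
        funext fun l ↦ by simp [hb', Polynomial.coeff_monomial, hNk.symm]
      rw [this, Polynomial.coeff_eq_zero_of_natDegree_lt ((ha j).trans_lt (by lia))]
      simp
  · rw [Matrix.mulVec_sub, Matrix.mulVec_mulVec, h, Matrix.zero_mulVec, sub_zero]

lemma exists_natDegree_le_pencil_mulVec_eq {A₀ B₀ : Matrix m n R} {A₁ B₁ : Matrix n p R}
    (hA : Function.Exact A₁.mulVec A₀.mulVec) (h : pencil A₀ B₀ * pencil A₁ B₁ = 0)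
    (a : n → R[X]) {d : ℕ} (hd : ∀ i, ((pencil A₀ B₀ *ᵥ a) i).natDegree ≤ d + 1) :
    ∃ a' : n → R[X], (∀ j, (a' j).natDegree ≤ d) ∧ pencil A₀ B₀ *ᵥ a' = pencil A₀ B₀ *ᵥ a := by
  suffices H : ∀ (k : ℕ) (a : n → R[X]), (∀ j, (a j).natDegree ≤ d + k) →
      (∀ i, ((pencil A₀ B₀ *ᵥ a) i).natDegree ≤ d + 1) → ∃ a' : n → R[X],
        (∀ j, (a' j).natDegree ≤ d) ∧ pencil A₀ B₀ *ᵥ a' = pencil A₀ B₀ *ᵥ a from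
    H (Finset.univ.sup fun j ↦ (a j).natDegree) a (fun j ↦ le_add_of_nonneg_of_le (Nat.zero_le d)
      (Finset.le_sup (f := fun j ↦ (a j).natDegree) (Finset.mem_univ j))) hd
  intro k
  induction k with
  | zero => exact fun a ha _ ↦ ⟨a, ha, rfl⟩
  | succ k ih =>
    intro a ha hd
    obtain ⟨b, hb, hab⟩ :=
      exists_natDegree_le_of_natDegree_le_succ hA h ha fun i ↦ (hd i).trans (by lia)
    obtain ⟨a', ha', hba⟩ := ih b hb (by rwa [hab])
    exact ⟨a', ha', hba.trans hab⟩

end Pencil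

section PolynomialVec

variable {R : Type*} [Semiring R]

/-- The `m` polynomials of degree at most `d` whose coefficients, listed in increasing degree one
polynomial after the other, are the entries of `c`. -/
def polynomialVec (m d : ℕ) (c : Fin (m * (d + 1)) → R) (k : Fin m) : R[X] :=
  ∑ j : Fin (d + 1), Polynomial.C (c (finProdFinEquiv (k, j))) * Polynomial.X ^ (j : ℕ)

variable {m d : ℕ}

lemma coeff_polynomialVec (c : Fin (m * (d + 1)) → R) (k : Fin m) (j : Fin (d + 1)) :
    (polynomialVec m d c k).coeff j = c (finProdFinEquiv (k, j)) := by
  simp [polynomialVec, Polynomial.coeff_X_pow, Fin.val_inj]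

lemma natDegree_polynomialVec_le (c : Fin (m * (d + 1)) → R) (k : Fin m) :
    (polynomialVec m d c k).natDegree ≤ d :=
  Polynomial.natDegree_sum_le_of_forall_le _ _ fun j _ ↦
    (Polynomial.natDegree_C_mul_X_pow_le _ _).trans j.is_le

lemma polynomialVec_injective : Function.Injective (polynomialVec m d (R := R)) := by
  intro c c' h
  ext i
  obtain ⟨⟨k, j⟩, rfl⟩ := finProdFinEquiv.surjective i
  rw [← coeff_polynomialVec c k j, h, coeff_polynomialVec]

lemma exists_polynomialVec_eq {a : Fin m → R[X]} (ha : ∀ k, (a k).natDegree ≤ d) :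
    ∃ c, polynomialVec m d c = a := by
  refine ⟨fun i ↦ (a (finProdFinEquiv.symm i).1).coeff (finProdFinEquiv.symm i).2,
    funext fun k ↦ ?_⟩
  rw [(a k).as_sum_range_C_mul_X_pow' (Nat.lt_succ_of_le (ha k)), ← Fin.sum_univ_eq_sum_range]
  simp [polynomialVec]

end PolynomialVec

section LinearForm

variable {R : Type*} [CommRing R]

/-- The linear polynomial `x k * T - u k`, with root `T = u k / x k`. -/
def linearForm {ι : Type*} (x u : ι → R) (k : ι) : R[X] :=
  Polynomial.C (x k) * Polynomial.X - Polynomial.C (u k)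

lemma pencil_koszul₁ (x u : Fin 3 → R) :
    pencil (koszul₁ x) (koszul₁ u) = koszul₁ (linearForm x u) := by
  ext1 i j
  fin_cases i; fin_cases j <;> simp [pencil, koszul₁, linearForm]

lemma pencil_koszul₂ (x u : Fin 3 → R) :
    pencil (koszul₂ x) (koszul₂ u) = koszul₂ (linearForm x u) := by
  ext1 i j
  fin_cases i <;> fin_cases j <;> simp [pencil, koszul₂, linearForm] <;> ring

lemma pencil_koszul₃ (x u : Fin 3 → R) :
    pencil (koszul₃ x) (koszul₃ u) = koszul₃ (linearForm x u) := by
  ext1 i j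
  fin_cases i <;> fin_cases j <;> simp [pencil, koszul₃, linearForm]

variable [IsDomain R] {x u : Fin 3 → R} (hx : IsPrimeSequence x)
include hx

lemma exists_koszul₁_mulVec_eq {d : ℕ} {f : R[X]} (hd : f.natDegree ≤ d + 1)
    (hf : f ∈ Ideal.span (Set.range (linearForm x u))) :
    ∃ a : Fin 3 → R[X], (∀ j, (a j).natDegree ≤ d) ∧ koszul₁ (linearForm x u) *ᵥ a = ![f] := by
  obtain ⟨a, ha⟩ := Ideal.mem_span_range_iff_exists_fun.mp hf
  have ha' : pencil (koszul₁ x) (koszul₁ u) *ᵥ a = ![f] := by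
    rw [pencil_koszul₁, koszul₁_mulVec, ← ha, Fin.sum_univ_three]
    simp only [mul_comm]
  obtain ⟨a', hda, haa⟩ := exists_natDegree_le_pencil_mulVec_eq (d := d) hx.exact_koszul₂_koszul₁
    (B₁ := koszul₂ u) (by rw [pencil_koszul₁, pencil_koszul₂, koszul₁_mul_koszul₂]) a
    (by simpa [ha'] using hd)
  exact ⟨a', hda, by rw [← pencil_koszul₁, haa, ha']⟩

variable (hl : IsPrimeSequence (linearForm x u))
include hl

lemma exists_koszul₂_mulVec_eq {d : ℕ} {a : Fin 3 → R[X]} (hd : ∀ j, (a j).natDegree ≤ d + 1)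
    (ha : koszul₁ (linearForm x u) *ᵥ a = 0) :
    ∃ b : Fin 3 → R[X], (∀ j, (b j).natDegree ≤ d) ∧ koszul₂ (linearForm x u) *ᵥ b = a := by
  obtain ⟨b, rfl⟩ := (hl.exact_koszul₂_koszul₁ a).mp ha
  simp only [← pencil_koszul₂] at hd ⊢
  exact exists_natDegree_le_pencil_mulVec_eq hx.exact_koszul₃_koszul₂ (B₁ := koszul₃ u)
    (by rw [pencil_koszul₂, pencil_koszul₃, koszul₂_mul_koszul₃]) b hd

lemma exists_koszul₃_mulVec_eq {d : ℕ} {b : Fin 3 → R[X]} (hd : ∀ j, (b j).natDegree ≤ d + 1)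
    (hb : koszul₂ (linearForm x u) *ᵥ b = 0) :
    ∃ t : Fin 1 → R[X], (∀ j, (t j).natDegree ≤ d) ∧ koszul₃ (linearForm x u) *ᵥ t = b := by
  obtain ⟨t, rfl⟩ := (hl.exact_koszul₃_koszul₂ b).mp hb
  have hexact : Function.Exact (0 : Matrix (Fin 1) (Fin 0) R).mulVec (koszul₃ x).mulVec := by
    refine fun t ↦ ⟨fun ht ↦ ⟨0, ?_⟩, ?_⟩
    · exact (hx.koszul₃_mulVec_injective (ht.trans (Matrix.mulVec_zero _).symm)).symm
    · rintro ⟨_, rfl⟩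
      simp
  simp only [← pencil_koszul₃] at hd ⊢
  exact exists_natDegree_le_pencil_mulVec_eq hexact (B₁ := 0) (by simp [pencil]) t hd

end LinearForm

section Prime

lemma isPrime_of_mk_comp_eq {S : Type*} [CommRing S] [IsDomain S] {J : Ideal S} (θ : S →+* S)
    (hJ : J ≤ RingHom.ker θ) (h : (Ideal.Quotient.mk J).comp θ = Ideal.Quotient.mk J) :
    J.IsPrime := by
  suffices J = RingHom.ker θ from this ▸ RingHom.ker_isPrime θ
  refine le_antisymm hJ fun s hs ↦ Ideal.Quotient.eq_zero_iff_mem.mp ?_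
  rw [← h, RingHom.comp_apply, RingHom.mem_ker.mp hs, map_zero]

variable {A σ ι : Type*} [CommRing A] [IsDomain A]

lemma isPrime_span_X_image (s : Set σ) :
    (Ideal.span ((X : σ → MvPolynomial σ A) '' s)).IsPrime := by
  classical
  refine isPrime_of_mk_comp_eq
    (aeval (R := A) fun n ↦ if n ∈ s then 0 else X n : _ →ₐ[A] MvPolynomial σ A).toRingHom ?_ ?_
  · rw [Ideal.span_le]
    rintro _ ⟨n, hn, rfl⟩
    simp [hn]
  · refine ringHom_ext (by simp) fun n ↦ ?_
    by_cases hn : n ∈ s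
    · simpa [hn] using (Ideal.Quotient.eq_zero_iff_mem.mpr
        (Ideal.subset_span (Set.mem_image_of_mem X hn))).symm
    · simp [hn]

lemma isPrime_span_linearForm_image {i j : ι → σ} (hi : Function.Injective i)
    (hij : ∀ k l, i k ≠ j l) (s : Set ι) :
    (Ideal.span (linearForm (X ∘ j : ι → MvPolynomial σ A) (X ∘ i) '' s)).IsPrime := by
  classical
  set J := Ideal.span (linearForm (X ∘ j : ι → MvPolynomial σ A) (X ∘ i) '' s) with hJ
  let g : σ → (MvPolynomial σ A)[X] := Function.extend (fun k : s ↦ i k)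
    (fun k ↦ Polynomial.C (X (j k)) * Polynomial.X) (fun n ↦ Polynomial.C (X n))
  have hgi (k : ι) (hk : k ∈ s) : g (i k) = Polynomial.C (X (j k)) * Polynomial.X :=
    (hi.comp Subtype.val_injective).extend_apply _ _ (⟨k, hk⟩ : s)
  have hgn (n : σ) (hn : ∀ k ∈ s, i k ≠ n) : g n = Polynomial.C (X n) :=
    Function.extend_apply' _ _ _ fun ⟨k, hk⟩ ↦ hn k k.2 hk
  -- The ring endomorphism substituting `X (j k) * T` for `X (i k)`, `k ∈ s`, has kernel `J`.
  refine isPrime_of_mk_comp_eq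
    (Polynomial.eval₂RingHom (aeval (R := A) g).toRingHom Polynomial.X) ?_ ?_
  · rw [hJ, Ideal.span_le]
    rintro _ ⟨k, hk, rfl⟩
    simp [linearForm, hgi k hk, hgn (j k) fun l _ ↦ hij l k]
  · refine Polynomial.ringHom_ext' (ringHom_ext (by simp) fun n ↦ ?_) (by simp)
    by_cases hn : ∃ k ∈ s, i k = n
    · obtain ⟨k, hk, rfl⟩ := hn
      have hmem : linearForm (X ∘ j : ι → MvPolynomial σ A) (X ∘ i) k ∈ J :=
        Ideal.subset_span (Set.mem_image_of_mem _ hk)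
      simpa [hgi k hk, linearForm] using Ideal.Quotient.eq.mpr hmem
    · push Not at hn
      simp [hgn n hn]

lemma isPrimeSequence_X {i : Fin 3 → σ} (hi : Function.Injective i) :
    IsPrimeSequence (X ∘ i : Fin 3 → MvPolynomial σ A) where
  prime_zero := X_prime
  not_dvd := by simp [X_dvd_X, hi.eq_iff]
  isPrime_span := by
    simpa [Set.image_pair] using isPrime_span_X_image (A := A) {i 0, i 1}
  notMem_span := by
    simpa [Set.image_pair, support_X, Finsupp.single_apply, hi.eq_iff] using
      mem_ideal_span_X_image (R := A) (x := X (i 2)) (s := {i 0, i 1}).not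

lemma linearForm_X_notMem_span_image {i j : ι → σ} (hi : Function.Injective i) {s : Set ι} {k : ι}
    (hk : k ∉ s) : linearForm (X ∘ j : ι → MvPolynomial σ A) (X ∘ i) k ∉
      Ideal.span (linearForm (X ∘ j : ι → MvPolynomial σ A) (X ∘ i) '' s) := by
  classical
  let φ : (MvPolynomial σ A)[X] →+* A := Polynomial.eval₂RingHom (eval (Pi.single (i k) 1)) 0
  have hφ :
      Ideal.span (linearForm (X ∘ j : ι → MvPolynomial σ A) (X ∘ i) '' s) ≤ RingHom.ker φ := by
    rw [Ideal.span_le]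
    rintro _ ⟨l, hl, rfl⟩
    have hlk : l ≠ k := by rintro rfl; exact hk hl
    simp [φ, linearForm, hi.eq_iff, Pi.single_apply, hlk]
  exact fun h ↦ by simpa [φ, linearForm] using RingHom.mem_ker.mp (hφ h)

lemma isPrimeSequence_linearForm_X {i j : Fin 3 → σ} (hi : Function.Injective i)
    (hij : ∀ k l, i k ≠ j l) :
    IsPrimeSequence (linearForm (X ∘ j : Fin 3 → MvPolynomial σ A) (X ∘ i)) := by
  have h₀ : linearForm (X ∘ j : Fin 3 → MvPolynomial σ A) (X ∘ i) 0 ≠ 0 := fun h ↦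
    linearForm_X_notMem_span_image hi (s := ∅) (Set.notMem_empty 0) (h ▸ zero_mem _)
  refine ⟨(Ideal.span_singleton_prime h₀).mp ?_, Ideal.mem_span_singleton.not.mp ?_, ?_, ?_⟩
  · simpa using isPrime_span_linearForm_image hi hij {0}
  · simpa using linearForm_X_notMem_span_image (j := j) (s := {0}) (k := 1) hi (by simp)
  · simpa [Set.image_pair] using isPrime_span_linearForm_image hi hij {0, 1}
  · simpa [Set.image_pair] using
      linearForm_X_notMem_span_image (j := j) (s := {0, 1}) (k := 2) hi (by simp)

end Prime

section HilbertBurch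

variable {R : Type*} [CommRing R] [IsDomain R] {u x : Fin 3 → R}

lemma exists_eq_smul_add_smul_of_dotProduct_cross_eq_zero
    (h₀ : Prime ((u ⨯₃ x) 0)) (h₁ : ¬ (u ⨯₃ x) 0 ∣ (u ⨯₃ x) 1)
    (hP : (Ideal.span {u 2, x 2}).IsPrime) (h₂ : (u ⨯₃ x) 2 ∉ Ideal.span {u 2, x 2})
    {a : Fin 3 → R} (ha : a ⬝ᵥ u ⨯₃ x = 0) : ∃ e f : R, a = e • u + f • x := by
  have h : a 0 * (u ⨯₃ x) 0 + a 1 * (u ⨯₃ x) 1 + a 2 * (u ⨯₃ x) 2 = 0 := by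
    simpa [dotProduct, Fin.sum_univ_three] using ha
  simp only [cross_apply, Matrix.cons_val] at h h₀ h₁ h₂
  obtain ⟨e, f, hef⟩ := Ideal.mem_span_pair.mp <| (hP.mem_or_mem (x := a 2)
    (Ideal.mem_span_pair.mpr ⟨a 0 * x 1 - a 1 * x 0, a 1 * u 0 - a 0 * u 1,
      by linear_combination -h⟩)).resolve_right h₂
  obtain ⟨t, ht₀, ht₁⟩ := exists_eq_mul_of_prime_of_not_dvd h₀ h₁
    (a := a 0 - e * u 0 - f * x 0) (b := a 1 - e * u 1 - f * x 1)
    (by linear_combination h + (u 0 * x 1 - u 1 * x 0) * hef)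
  refine ⟨e - t * x 2, f + t * u 2, funext fun i ↦ ?_⟩
  fin_cases i
  · change a 0 = (e - t * x 2) * u 0 + (f + t * u 2) * x 0
    linear_combination ht₀
  · change a 1 = (e - t * x 2) * u 1 + (f + t * u 2) * x 1
    linear_combination ht₁
  · change a 2 = (e - t * x 2) * u 2 + (f + t * u 2) * x 2
    linear_combination -hef

lemma eq_zero_of_smul_add_smul_eq_zero (h : u ⨯₃ x ≠ 0) {e f : R} (hef : e • u + f • x = 0) :
    e = 0 ∧ f = 0 := by
  constructor
  · have : e • u ⨯₃ x = 0 := by simpa using congrArg (· ⨯₃ x) hef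
    exact (smul_eq_zero.mp this).resolve_right h
  · have : f • u ⨯₃ x = 0 := by simpa using congrArg (u ⨯₃ ·) hef
    exact (smul_eq_zero.mp this).resolve_right h

end HilbertBurch

section Resolution

/-- The linear forms `x T - u`, `y T - v`, `z T - w`: on the Segre cone, `T` is the coordinate
`u / x = v / y = w / z` of `ℙ¹`. -/
abbrev segreForms : Fin 3 → R16[X] := linearForm ![x, y, z] ![u, v, w]

lemma X_comp_eq_xyz : (X ∘ ![3, 4, 5] : Fin 3 → R16) = ![x, y, z] := by
  ext1 i
  fin_cases i <;> rfl

lemma X_comp_eq_uvw : (X ∘ ![0, 1, 2] : Fin 3 → R16) = ![u, v, w] := by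
  ext1 i
  fin_cases i <;> rfl

lemma isPrimeSequence_xyz : IsPrimeSequence ![x, y, z] :=
  X_comp_eq_xyz ▸ isPrimeSequence_X (by decide)

lemma isPrimeSequence_segreForms : IsPrimeSequence segreForms := by
  rw [segreForms, ← X_comp_eq_xyz, ← X_comp_eq_uvw]
  exact isPrimeSequence_linearForm_X (by decide) (by decide)

lemma isPrime_span_segreForms : (Ideal.span (Set.range segreForms)).IsPrime := by
  rw [segreForms, ← X_comp_eq_xyz, ← X_comp_eq_uvw, ← Set.image_univ]
  exact isPrime_span_linearForm_image (by decide) (by decide) _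

lemma prime_minor : Prime (v * z - w * y) := by
  have hirr : Irreducible (z * X 1 + -(w * y)) := by
    refine irreducible_mul_X_add _ _ _ (X_ne_zero _) (by simp [z]) (fun h ↦ ?_) ?_
    · rw [vars_neg] at h
      simpa [w, y] using vars_mul w y h
    · have hz : Prime z := X_prime
      rw [IsRelPrime.neg_right_iff, hz.irreducible.isRelPrime_iff_not_dvd, hz.dvd_mul]
      simp [z, w, y, X_dvd_X]
  rw [← irreducible_iff_prime, sub_eq_add_neg, mul_comm v]
  exact hirr

lemma not_minor_dvd : ¬ v * z - w * y ∣ w * x - u * z := by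
  rintro ⟨t, ht⟩
  simpa [u, v, w, x, y, z] using congrArg (eval ![0, 0, 1, 1, 0, 0]) ht

lemma isPrime_span_wz : (Ideal.span {w, z}).IsPrime := by
  have h := isPrime_span_X_image (A := ℤ) {(2 : Fin 6), 5}
  rwa [Set.image_pair] at h

lemma minor_notMem_span_wz : u * y - v * x ∉ Ideal.span {w, z} := by
  intro h
  obtain ⟨s, t, hst⟩ := Ideal.mem_span_pair.mp h
  simpa [u, v, w, x, y, z] using congrArg (eval ![1, 0, 0, 0, 1, 0]) hst

lemma exists_eq_mul_add_mul_of_minors {a b c : R16}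
    (h : a * (v * z - w * y) + b * (w * x - u * z) + c * (u * y - v * x) = 0) :
    ∃ e f, a = e * u + f * x ∧ b = e * v + f * y ∧ c = e * w + f * z := by
  obtain ⟨e, f, hef⟩ := exists_eq_smul_add_smul_of_dotProduct_cross_eq_zero
    (u := ![u, v, w]) (x := ![x, y, z]) (a := ![a, b, c])
    (by simpa [cross_apply] using prime_minor) (by simpa [cross_apply] using not_minor_dvd)
    isPrime_span_wz (by simpa [cross_apply] using minor_notMem_span_wz)
    (by simpa [cross_apply, dotProduct, Fin.sum_univ_three, add_assoc] using h)
  exact ⟨e, f, congrFun hef 0, congrFun hef 1, congrFun hef 2⟩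

lemma eq_zero_of_mul_add_mul_eq_zero {e f : R16} (hu : e * u + f * x = 0) (hv : e * v + f * y = 0)
    (hw : e * w + f * z = 0) : e = 0 ∧ f = 0 := by
  refine eq_zero_of_smul_add_smul_eq_zero (u := ![u, v, w]) (x := ![x, y, z]) (fun h ↦ ?_) ?_
  · exact prime_minor.ne_zero (by simpa [cross_apply] using congrFun h 0)
  · ext1 i
    fin_cases i <;> simpa

/-- The generators of `I`: the three minors, then the images of `F, F T, F T ^ 2, F T ^ 3` under
`x T = u, y T = v, z T = w`, where `F = x ^ 3 + y ^ 3 + z ^ 3`. -/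
def generators : Fin 7 → R16 :=
  ![v * z - w * y, w * x - u * z, u * y - v * x,
    x ^ 3 + y ^ 3 + z ^ 3, u * x ^ 2 + v * y ^ 2 + w * z ^ 2,
    u ^ 2 * x + v ^ 2 * y + w ^ 2 * z, u ^ 3 + v ^ 3 + w ^ 3]

/-- The differential `R¹¹ → R⁷`. Its first two columns are the syzygies of the minors. The others
record `koszul₁ segreForms` on triples of polynomials of degree at most `2` (rows `3` to `6`, as
polynomials of degree at most `3`), lifted to the minors in the first three rows. -/
def differential₂ : Matrix (Fin 7) (Fin 11) R16 :=
  !![u, x, 0, 0, 0, z ^ 2, w * z, w ^ 2, -y ^ 2, -(v * y), -v ^ 2;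
    v, y, -z ^ 2, -(w * z), -w ^ 2, 0, 0, 0, x ^ 2, u * x, u ^ 2;
    w, z, y ^ 2, v * y, v ^ 2, -x ^ 2, -(u * x), -u ^ 2, 0, 0, 0;
    0, 0, -u, 0, 0, -v, 0, 0, -w, 0, 0;
    0, 0, x, -u, 0, y, -v, 0, z, -w, 0;
    0, 0, 0, x, -u, 0, y, -v, 0, z, -w;
    0, 0, 0, 0, x, 0, 0, y, 0, 0, z]

/-- The differential `R⁶ → R¹¹`: `koszul₂ segreForms` on triples of polynomials of degree at most
`1` (rows `2` to `10`), lifted to the syzygies of the minors in the first two rows. -/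
def differential₃ : Matrix (Fin 11) (Fin 6) R16 :=
  !![-x ^ 2, -(u * x), -y ^ 2, -(v * y), -z ^ 2, -(w * z);
    u * x, u ^ 2, v * y, v ^ 2, w * z, w ^ 2;
    0, 0, w, 0, -v, 0;
    0, 0, -z, w, y, -v;
    0, 0, 0, -z, 0, y;
    -w, 0, 0, 0, u, 0;
    z, -w, 0, 0, -x, u;
    0, z, 0, 0, 0, -x;
    v, 0, -u, 0, 0, 0;
    -y, v, x, -u, 0, 0;
    0, -y, 0, x, 0, 0]

/-- The differential `R → R⁶`: `koszul₃ segreForms` on constants. -/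
def differential₄ : Matrix (Fin 6) (Fin 1) R16 :=
  !![-u; x; -v; y; -w; z]

lemma vecMul_generators_differential₂ : generators ᵥ* differential₂ = 0 := by
  ext1 j
  fin_cases j <;>
    simp [generators, differential₂, Matrix.vecMul, dotProduct, Fin.sum_univ_succ] <;> ring

lemma differential₂_mul_differential₃ : differential₂ * differential₃ = 0 := by
  ext1 i j
  fin_cases i <;> fin_cases j <;>
    simp [differential₂, differential₃, Matrix.mul_apply, Fin.sum_univ_succ] <;> ring

lemma differential₃_mul_differential₄ : differential₃ * differential₄ = 0 := by
  ext1 i j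
  fin_cases i <;> fin_cases j <;>
    simp [differential₃, differential₄, Matrix.mul_apply, Fin.sum_univ_succ] <;> ring

lemma exact_differential₁_mkQ :
    Function.Exact (Fintype.linearCombination R16 generators) I.mkQ := by
  rw [LinearMap.exact_iff, Submodule.ker_mkQ, Fintype.range_linearCombination, I, generators]
  simp only [Matrix.range_cons, Matrix.range_empty, Set.union_empty, Set.singleton_union]

lemma C_cubic_notMem_span_segreForms :
    Polynomial.C (x ^ 3 + y ^ 3 + z ^ 3) ∉ Ideal.span (Set.range segreForms) := by
  intro h
  let φ : R16[X] →+* ℤ := Polynomial.eval₂RingHom (eval ![0, 0, 0, 1, 0, 0]) 0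
  have hφ : Ideal.span (Set.range segreForms) ≤ RingHom.ker φ := by
    rw [Ideal.span_le]
    rintro _ ⟨k, rfl⟩
    fin_cases k <;> simp [φ, linearForm, u, v, w, x, y, z]
  have hF : eval ![0, 0, 0, 1, 0, 0] (x ^ 3 + y ^ 3 + z ^ 3) = (0 : ℤ) := by
    simpa only [φ, Polynomial.coe_eval₂RingHom, Polynomial.eval₂_C] using RingHom.mem_ker.mp (hφ h)
  simp [x, y, z] at hF

lemma mem_span_segreForms {c : Fin 7 → R16} (h : c ⬝ᵥ generators = 0) :
    polynomialVec 1 3 (fun i ↦ c (i.natAdd 3)) 0 ∈ Ideal.span (Set.range segreForms) := by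
  set J := Ideal.span (Set.range segreForms)
  set q : R16 →+* R16[X] ⧸ J := (Ideal.Quotient.mk J).comp Polynomial.C with hq
  set T := Ideal.Quotient.mk J Polynomial.X
  have hl (k : Fin 3) : q (![u, v, w] k) = q (![x, y, z] k) * T := by
    simpa [q, T] using
      (Ideal.Quotient.eq.mpr (Ideal.subset_span (Set.mem_range_self (f := segreForms) k))).symm
  have hu : q u = q x * T := hl 0
  have hv : q v = q y * T := hl 1
  have hw : q w = q z * T := hl 2
  have hpoly : Ideal.Quotient.mk J (polynomialVec 1 3 (fun i ↦ c (i.natAdd 3)) 0) =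
      q (c 3) + q (c 4) * T + q (c 5) * T ^ 2 + q (c 6) * T ^ 3 := by
    simp [polynomialVec, Fin.sum_univ_succ, finProdFinEquiv, q, T, add_assoc]
  have hdot : q (c 0 * (v * z - w * y) + c 1 * (w * x - u * z) + c 2 * (u * y - v * x) +
      c 3 * (x ^ 3 + y ^ 3 + z ^ 3) + c 4 * (u * x ^ 2 + v * y ^ 2 + w * z ^ 2) +
      c 5 * (u ^ 2 * x + v ^ 2 * y + w ^ 2 * z) + c 6 * (u ^ 3 + v ^ 3 + w ^ 3)) = 0 := by
    rw [← map_zero q, ← h, dotProduct, Fin.sum_univ_seven]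
    rfl
  refine (isPrime_span_segreForms.mem_or_mem (x := Polynomial.C (x ^ 3 + y ^ 3 + z ^ 3))
    (Ideal.Quotient.eq_zero_iff_mem.mp ?_)).resolve_left C_cubic_notMem_span_segreForms
  rw [map_mul, hpoly, ← RingHom.comp_apply, ← hq]
  simp only [map_add, map_sub, map_mul, map_pow, hu, hv, hw] at hdot ⊢
  linear_combination hdot

lemma koszul₁_mulVec_polynomialVec (c : Fin 11 → R16) :
    koszul₁ segreForms *ᵥ polynomialVec 3 2 (fun i ↦ c (i.natAdd 2)) =
      polynomialVec 1 3 fun i ↦ (differential₂ *ᵥ c) (i.natAdd 3) := by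
  ext1 k
  fin_cases k
  rw [koszul₁_mulVec]
  simp [polynomialVec, linearForm, differential₂, Matrix.mulVec, dotProduct, Fin.sum_univ_succ,
    finProdFinEquiv]
  ring

lemma koszul₂_mulVec_polynomialVec (c : Fin 6 → R16) :
    koszul₂ segreForms *ᵥ polynomialVec 3 1 c =
      polynomialVec 3 2 fun i ↦ (differential₃ *ᵥ c) (i.natAdd 2) := by
  rw [koszul₂_mulVec]
  ext1 k
  fin_cases k <;>
    simp [polynomialVec, linearForm, differential₃, Matrix.mulVec, dotProduct, Fin.sum_univ_succ,
      finProdFinEquiv] <;> ring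

lemma koszul₃_mulVec_polynomialVec (c : Fin 1 → R16) :
    koszul₃ segreForms *ᵥ polynomialVec 1 0 c = polynomialVec 3 1 (differential₄ *ᵥ c) := by
  rw [koszul₃_mulVec]
  ext1 k
  fin_cases k <;>
    simp [polynomialVec, linearForm, differential₄, Matrix.mulVec, dotProduct, Fin.sum_univ_succ,
      finProdFinEquiv] <;> ring

lemma mulVec_differential₂_dotProduct_generators (a : Fin 11 → R16) :
    differential₂ *ᵥ a ⬝ᵥ generators = 0 := by
  rw [dotProduct_comm, Matrix.dotProduct_mulVec, vecMul_generators_differential₂, zero_dotProduct]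

lemma exists_differential₂_mulVec_natAdd_eq {c : Fin 7 → R16} (hc : c ⬝ᵥ generators = 0) :
    ∃ a, ∀ i : Fin 4, (differential₂ *ᵥ a) (i.natAdd 3) = c (i.natAdd 3) := by
  obtain ⟨q, hd, hq⟩ := exists_koszul₁_mulVec_eq isPrimeSequence_xyz (d := 2)
    (natDegree_polynomialVec_le _ _) (mem_span_segreForms hc)
  obtain ⟨a, rfl⟩ := exists_polynomialVec_eq hd
  have h := koszul₁_mulVec_polynomialVec (Fin.append 0 a)
  simp only [Fin.append_right, hq] at h
  refine ⟨Fin.append 0 a, congrFun (polynomialVec_injective (h.symm.trans ?_))⟩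
  ext1 k
  fin_cases k
  rfl

lemma differential₂_mulVec_of_natAdd_eq_zero {c : Fin 11 → R16}
    (h : ∀ i : Fin 9, c (i.natAdd 2) = 0) :
    differential₂ *ᵥ c = c 0 • ![u, v, w, 0, 0, 0, 0] + c 1 • ![x, y, z, 0, 0, 0, 0] := by
  have hcol₀ : (fun i ↦ differential₂ i 0) = ![u, v, w, 0, 0, 0, 0] := by
    ext1 i
    fin_cases i <;> rfl
  have hcol₁ : (fun i ↦ differential₂ i 1) = ![x, y, z, 0, 0, 0, 0] := by
    ext1 i
    fin_cases i <;> rfl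
  rw [← hcol₀, ← hcol₁]
  ext1 i
  have hsum := Fin.sum_univ_add (a := 2) (b := 9) fun j ↦ differential₂ i j * c j
  simp only [h, mul_zero, Finset.sum_const_zero, add_zero, Fin.sum_univ_two] at hsum
  rw [Matrix.mulVec, dotProduct, Pi.add_apply, Pi.smul_apply, Pi.smul_apply, smul_eq_mul,
    smul_eq_mul, mul_comm (c 0), mul_comm (c 1)]
  exact hsum

lemma exists_differential₂_mulVec_eq_of_natAdd_eq_zero {c : Fin 7 → R16}
    (hc : c ⬝ᵥ generators = 0) (h : ∀ i : Fin 4, c (i.natAdd 3) = 0) :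
    ∃ a, differential₂ *ᵥ a = c := by
  have hsum := Fin.sum_univ_add (a := 3) (b := 4) fun i ↦ c i * generators i
  simp only [h, zero_mul, Finset.sum_const_zero, add_zero, Fin.sum_univ_three] at hsum
  obtain ⟨e, f, h₀, h₁, h₂⟩ := exists_eq_mul_add_mul_of_minors (hsum.symm.trans hc)
  refine ⟨Fin.append ![e, f] (0 : Fin 9 → R16),
    (differential₂_mulVec_of_natAdd_eq_zero fun i ↦ Fin.append_right _ _ i).trans ?_⟩
  ext1 i
  induction i using Fin.addCases (m := 3) (n := 4) with
  | left i => fin_cases i; exacts [h₀.symm, h₁.symm, h₂.symm]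
  | right i => rw [h]; fin_cases i <;> simp

lemma exact_differential₂_differential₁ :
    Function.Exact differential₂.mulVecLin (Fintype.linearCombination R16 generators) := by
  refine fun c ↦ ⟨fun hc ↦ ?_, ?_⟩
  · obtain ⟨a, ha⟩ := exists_differential₂_mulVec_natAdd_eq hc
    have hca : (c - differential₂ *ᵥ a) ⬝ᵥ generators = 0 := by
      rw [sub_dotProduct, mulVec_differential₂_dotProduct_generators, sub_zero]
      exact hc
    obtain ⟨b, hb⟩ := exists_differential₂_mulVec_eq_of_natAdd_eq_zero hca fun i ↦
      sub_eq_zero.mpr (ha i).symm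
    exact ⟨b + a, by rw [Matrix.mulVecLin_apply, Matrix.mulVec_add, hb, sub_add_cancel]⟩
  · rintro ⟨a, rfl⟩
    exact mulVec_differential₂_dotProduct_generators a

lemma exists_differential₃_mulVec_natAdd_eq {c : Fin 11 → R16} (hc : differential₂ *ᵥ c = 0) :
    ∃ a, ∀ i : Fin 9, (differential₃ *ᵥ a) (i.natAdd 2) = c (i.natAdd 2) := by
  obtain ⟨q, hd, hq⟩ := exists_koszul₂_mulVec_eq isPrimeSequence_xyz isPrimeSequence_segreForms
    (d := 1) (a := polynomialVec 3 2 fun i ↦ c (i.natAdd 2)) (natDegree_polynomialVec_le _) (by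
      ext1 k
      simp [koszul₁_mulVec_polynomialVec, hc, polynomialVec])
  obtain ⟨a, rfl⟩ := exists_polynomialVec_eq hd
  rw [koszul₂_mulVec_polynomialVec] at hq
  exact ⟨a, congrFun (polynomialVec_injective hq)⟩

lemma eq_zero_of_differential₂_mulVec_eq_zero {c : Fin 11 → R16} (hc : differential₂ *ᵥ c = 0)
    (h : ∀ i : Fin 9, c (i.natAdd 2) = 0) : c = 0 := by
  rw [differential₂_mulVec_of_natAdd_eq_zero h] at hc
  obtain ⟨h₀, h₁⟩ :=
    eq_zero_of_mul_add_mul_eq_zero (congrFun hc 0) (congrFun hc 1) (congrFun hc 2)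
  ext1 i
  induction i using Fin.addCases (m := 2) (n := 9) with
  | left i => fin_cases i; exacts [h₀, h₁]
  | right i => exact h i

lemma exact_differential₃_differential₂ :
    Function.Exact differential₃.mulVecLin differential₂.mulVecLin := by
  refine fun c ↦ ⟨fun hc ↦ ?_, ?_⟩
  · obtain ⟨a, ha⟩ := exists_differential₃_mulVec_natAdd_eq hc
    have hca : differential₂ *ᵥ (c - differential₃ *ᵥ a) = 0 := by
      rw [Matrix.mulVec_sub, Matrix.mulVec_mulVec, differential₂_mul_differential₃,
        Matrix.zero_mulVec, sub_zero]
      exact hc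
    exact ⟨a, (sub_eq_zero.mp (eq_zero_of_differential₂_mulVec_eq_zero hca fun i ↦
      sub_eq_zero.mpr (ha i).symm)).symm⟩
  · rintro ⟨a, rfl⟩
    simp [differential₂_mul_differential₃]

lemma exact_differential₄_differential₃ :
    Function.Exact differential₄.mulVecLin differential₃.mulVecLin := by
  refine fun c ↦ ⟨fun hc ↦ ?_, ?_⟩
  · have hc' : differential₃ *ᵥ c = 0 := hc
    obtain ⟨t, hd, ht⟩ := exists_koszul₃_mulVec_eq isPrimeSequence_xyz isPrimeSequence_segreForms
      (d := 0) (b := polynomialVec 3 1 c) (natDegree_polynomialVec_le _) (by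
        ext1 k
        simp [koszul₂_mulVec_polynomialVec, hc', polynomialVec])
    obtain ⟨a, rfl⟩ := exists_polynomialVec_eq hd
    rw [koszul₃_mulVec_polynomialVec] at ht
    exact ⟨a, polynomialVec_injective ht⟩
  · rintro ⟨a, rfl⟩
    simp [differential₃_mul_differential₄]

lemma differential₄_injective : Function.Injective differential₄.mulVecLin := by
  intro a b h
  refine polynomialVec_injective (m := 1) (d := 0)
    (isPrimeSequence_segreForms.koszul₃_mulVec_injective ?_)
  rw [koszul₃_mulVec_polynomialVec, koszul₃_mulVec_polynomialVec]
  exact congrArg _ h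

lemma comp_differential₄_ne_proj (f : (Fin 6 → R16) →ₗ[R16] R16) :
    f ∘ₗ differential₄.mulVecLin ≠ LinearMap.proj 0 := by
  intro h
  have h₁ := LinearMap.congr_fun h 1
  rw [LinearMap.comp_apply, LinearMap.pi_apply_eq_sum_univ f] at h₁
  simpa [differential₄, Matrix.mulVec, dotProduct, Fin.sum_univ_succ, u, v, w, x, y, z] using
    congrArg constantCoeff h₁

lemma isLengthFourResolution : IsLengthFourResolution differential₄.mulVecLin
    differential₃.mulVecLin differential₂.mulVecLin (Fintype.linearCombination R16 generators)
    I.mkQ :=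
  ⟨differential₄_injective, exact_differential₄_differential₃, exact_differential₃_differential₂,
    exact_differential₂_differential₁, exact_differential₁_mkQ, I.mkQ_surjective⟩

end Resolution

theorem free_resolution_of_segre_cone :
    (∃ (d₄ : (Fin 1 → R16) →ₗ[R16] (Fin 6 → R16))
       (d₃ : (Fin 6 → R16) →ₗ[R16] (Fin 11 → R16))
       (d₂ : (Fin 11 → R16) →ₗ[R16] (Fin 7 → R16))
       (d₁ : (Fin 7 → R16) →ₗ[R16] R16),
       Function.Injective d₄ ∧ Function.Exact d₄ d₃ ∧ Function.Exact d₃ d₂ ∧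
         Function.Exact d₂ d₁ ∧ Function.Exact d₁ I.mkQ ∧
         Function.Surjective I.mkQ) ∧
    Nontrivial (((Ext R16 (ModuleCat R16) 4).obj
      (Opposite.op (ModuleCat.of R16 (R16 ⧸ I)))).obj (ModuleCat.of R16 R16)) ∧
    (∀ j : ℕ, 4 < j → Subsingleton (((Ext R16 (ModuleCat R16) j).obj
      (Opposite.op (ModuleCat.of R16 (R16 ⧸ I)))).obj (ModuleCat.of R16 R16))) := by
  have h := isLengthFourResolution
  exact ⟨⟨_, _, _, _, h.injective, h.exact_d₄_d₃, h.exact_d₃_d₂, h.exact_d₂_d₁, h.exact_d₁_ε,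
      h.surjective⟩,
    h.nontrivial_ext (LinearMap.proj 0) comp_differential₄_ne_proj,
    fun _ hj ↦ h.subsingleton_ext hj _⟩

end Stmt16
end
end
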